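/- arXiv:2503.11354 — 7 statements merged into one kernel-verified Lean document; each statement's English description precedes it below -/
import Mathlib

section
/- For every c > 0, ∫_ℝ e^{-c t²} / √(1 + 2t²) dt = (1/√2) · e^{c/4} · ∫_0^∞ e^{-(c/4)·cosh(s)} ds. -/
open Real MeasureTheory

/-!
Under `√a * t = sinh (s / 2)` the factor `cosh (s / 2)` of the Jacobian cancels `√(1 + a * t ^ 2)`,
while `t ^ 2 = (cosh s - 1) / (2 * a)`. What remains is even in `s`, so the factor `1 / 2` of the
Jacobian is absorbed by integrating over `s > 0` only.
-/

section ChangeOfVariables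

variable {E : Type*} [NormedAddCommGroup E]

theorem integrable_comp_abs_iff {f : ℝ → E} :
    Integrable (fun x ↦ f |x|) ↔ IntegrableOn f (Set.Ioi 0) := by
  have abs_on_Ioi : IntegrableOn (fun x ↦ f |x|) (Set.Ioi 0) ↔ IntegrableOn f (Set.Ioi 0) :=
    integrableOn_congr_fun (fun x hx ↦ by rw [abs_of_pos hx]) measurableSet_Ioi
  have abs_on_Iic :
      IntegrableOn (fun x ↦ f |x|) (Set.Iic 0) ↔ IntegrableOn (fun x ↦ f |x|) (Set.Ioi 0) := by
    have reflection :=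
      (Measure.measurePreserving_neg (volume : Measure ℝ)).integrableOn_comp_preimage
        (MeasurableEquiv.neg ℝ).measurableEmbedding (f := fun x ↦ f |x|) (s := Set.Ici 0)
    rw [← integrableOn_Ici_iff_integrableOn_Ioi]
    simpa only [Function.comp_def, abs_neg, Set.neg_preimage, Set.neg_Ici, neg_zero]
      using reflection
  rw [← integrableOn_univ, ← Set.Iic_union_Ioi (a := (0 : ℝ)), integrableOn_union, abs_on_Iic,
    abs_on_Ioi, and_self]

variable [NormedSpace ℝ E]

theorem integral_comp_abs_eq_two_smul (f : ℝ → E) :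
    ∫ x, f |x| = (2 : ℝ) • ∫ x in Set.Ioi 0, f x := by
  by_cases hf : Integrable fun x ↦ f |x|
  · have abs_on_Ioi : ∫ x in Set.Ioi 0, f |x| = ∫ x in Set.Ioi 0, f x :=
      setIntegral_congr_fun measurableSet_Ioi fun x hx ↦ by rw [abs_of_pos hx]
    have abs_on_Iic : ∫ x in Set.Iic 0, f |x| = ∫ x in Set.Ioi 0, f |x| := by
      simpa only [abs_neg, neg_zero] using integral_comp_neg_Iic 0 fun x ↦ f |x|
    rw [← intervalIntegral.integral_Iic_add_Ioi hf.integrableOn hf.integrableOn, abs_on_Iic,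
      abs_on_Ioi, two_smul]
  · rw [integral_undef hf, integral_undef (mt integrable_comp_abs_iff.mpr hf), smul_zero]

theorem integral_inv_sqrt_one_add_sq_smul (f : ℝ → E) :
    ∫ t, (√(1 + t ^ 2))⁻¹ • f t = ∫ u, f (sinh u) := by
  have change_of_variables := integral_image_eq_integral_abs_deriv_smul MeasurableSet.univ
    (fun t _ ↦ (hasDerivAt_arsinh t).hasDerivWithinAt) arsinh_injective.injOn fun u ↦ f (sinh u)
  simpa only [Set.image_univ, arsinh_surjective.range_eq, setIntegral_univ, sinh_arsinh,
    abs_of_nonneg (inv_nonneg.mpr (sqrt_nonneg _))] using change_of_variables.symm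

theorem sinh_sq_eq_cosh_two_mul_sub_one_div_two (u : ℝ) :
    sinh u ^ 2 = (cosh (2 * u) - 1) / 2 := by
  rw [cosh_two_mul, cosh_sq]
  ring

theorem integral_comp_sinh_sq (f : ℝ → E) :
    ∫ u, f (sinh u ^ 2) = ∫ s in Set.Ioi 0, f ((cosh s - 1) / 2) :=
  calc
    ∫ u, f (sinh u ^ 2) = ∫ u, f ((cosh (2 * u) - 1) / 2) := by
      simp only [sinh_sq_eq_cosh_two_mul_sub_one_div_two]
    _ = (2 : ℝ)⁻¹ • ∫ s, f ((cosh |s| - 1) / 2) := by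
      rw [Measure.integral_comp_mul_left fun s ↦ f ((cosh s - 1) / 2)]
      simp only [cosh_abs, abs_of_pos (inv_pos.mpr (two_pos (α := ℝ)))]
    _ = ∫ s in Set.Ioi 0, f ((cosh s - 1) / 2) := by
      rw [integral_comp_abs_eq_two_smul fun s ↦ f ((cosh s - 1) / 2),
        inv_smul_smul₀ two_ne_zero]

theorem kernel_closed_form_general {a : ℝ} (ha : 0 < a) (f : ℝ → E) :
    ∫ t, (√(1 + a * t ^ 2))⁻¹ • f (t ^ 2)
      = (√a)⁻¹ • ∫ s in Set.Ioi 0, f ((cosh s - 1) / (2 * a)) :=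
  calc
    ∫ t, (√(1 + a * t ^ 2))⁻¹ • f (t ^ 2)
      = ∫ t, (√(1 + (√a * t) ^ 2))⁻¹ • f ((√a * t) ^ 2 / a) := by
        simp only [mul_pow, sq_sqrt ha.le, mul_div_cancel_left₀ _ ha.ne']
    _ = (√a)⁻¹ • ∫ x, (√(1 + x ^ 2))⁻¹ • f (x ^ 2 / a) := by
        rw [Measure.integral_comp_mul_left fun x ↦ (√(1 + x ^ 2))⁻¹ • f (x ^ 2 / a),
          abs_of_nonneg (inv_nonneg.mpr (sqrt_nonneg a))]
    _ = (√a)⁻¹ • ∫ s in Set.Ioi 0, f ((cosh s - 1) / (2 * a)) := by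
        rw [integral_inv_sqrt_one_add_sq_smul fun x ↦ f (x ^ 2 / a),
          integral_comp_sinh_sq fun y ↦ f (y / a)]
        simp only [div_div]

end ChangeOfVariables

theorem kernel_closed_form (c : ℝ) (hc : 0 < c) :
    ∫ t : ℝ, Real.exp (-c * t ^ 2) / Real.sqrt (1 + 2 * t ^ 2)
      = (1 / Real.sqrt 2) * Real.exp (c / 4) *
          ∫ s in Set.Ioi (0 : ℝ), Real.exp (-(c / 4) * Real.cosh s) := by
  have exp_split (s : ℝ) :
      exp (-c * ((cosh s - 1) / (2 * 2))) = exp (c / 4) * exp (-(c / 4) * cosh s) := by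
    rw [← exp_add]
    ring_nf
  simpa only [smul_eq_mul, inv_mul_eq_div, exp_split, integral_const_mul, one_div,
      div_mul_eq_mul_div]
    using kernel_closed_form_general two_pos fun x ↦ exp (-c * x)
end

section
/- lim_{c → 0⁺} (∫_0^∞ e^{-c t²} / √(1 + 2t²) dt) / log(1/c) = 1/(2√2). -/
open Real MeasureTheory Filter Topology

/-!
If `t ‖f t‖` is bounded, the Gaussian weight `exp (-c t²)` acts, up to a bounded error, as a sharp
cutoff at `t = T` with `c T² = 1`: below `T` use `1 - exp (-x) ≤ x`, above `T` use
`1 / t ≤ t / T²` and the explicit primitive of `t exp (-c t²)`. Hence the weighted integral of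
`1 / √(1 + a t²)` is `arsinh (√a T) / √a + O(1)`, and `arsinh x = log x + O(1)` with
`log T = log (1 / c) / 2` gives the constant `1 / (2 √a)`.
-/

section GaussianCutoff

variable {E : Type*} [NormedAddCommGroup E] {f : ℝ → E} {c K T : ℝ}

lemma nonneg_of_norm_le_div {x : E} {t : ℝ} (ht : 0 < t) (hx : ‖x‖ ≤ K / t) : 0 ≤ K := by
  simpa [ht.ne'] using mul_nonneg ((norm_nonneg x).trans hx) ht.le

variable [NormedSpace ℝ E]

lemma exp_neg_mul_sq_le_one (hc : 0 ≤ c) (t : ℝ) : exp (-c * t ^ 2) ≤ 1 := by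
  rw [exp_le_one_iff, neg_mul, neg_nonpos]
  positivity

lemma integral_Ioi_mul_exp_neg_mul_sq (hc : 0 < c) (T : ℝ) :
    ∫ t in Set.Ioi T, t * exp (-c * t ^ 2) = exp (-c * T ^ 2) / (2 * c) := by
  have hderiv (t : ℝ) :
      HasDerivAt (fun t ↦ -exp (-c * t ^ 2) / (2 * c)) (t * exp (-c * t ^ 2)) t := by
    refine (((hasDerivAt_pow 2 t).const_mul (-c)).exp.neg.div_const (2 * c)).congr_deriv ?_
    field_simp
    norm_num [mul_comm]
  have hlim : Tendsto (fun t ↦ -exp (-c * t ^ 2) / (2 * c)) atTop (𝓝 0) := by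
    have hexponent : Tendsto (fun t : ℝ ↦ -c * t ^ 2) atTop atBot :=
      (tendsto_pow_atTop two_ne_zero).const_mul_atTop_of_neg (neg_neg_of_pos hc)
    simpa using (tendsto_exp_atBot.comp hexponent).neg.div_const (2 * c)
  rw [integral_Ioi_of_hasDerivAt_of_tendsto' (fun t _ ↦ hderiv t)
    (integrable_mul_exp_neg_mul_sq hc).integrableOn hlim]
  ring

lemma norm_exp_neg_mul_sq_smul_le {x : E} {t : ℝ} (hT : 0 < T) (ht : T ≤ t) (hx : ‖x‖ ≤ K / t) :
    ‖exp (-c * t ^ 2) • x‖ ≤ K / T ^ 2 * (t * exp (-c * t ^ 2)) := by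
  have ht₀ : 0 < t := hT.trans_le ht
  have hK : 0 ≤ K := nonneg_of_norm_le_div ht₀ hx
  have hdecay : K / t ≤ K / T ^ 2 * t := by
    rw [div_mul_eq_mul_div, div_le_div_iff₀ ht₀ (by positivity), mul_assoc, ← sq]
    gcongr
  calc ‖exp (-c * t ^ 2) • x‖ = exp (-c * t ^ 2) * ‖x‖ := by
        rw [norm_smul, norm_of_nonneg (exp_pos _).le]
    _ ≤ exp (-c * t ^ 2) * (K / T ^ 2 * t) := by
        gcongr
        exact hx.trans hdecay
    _ = K / T ^ 2 * (t * exp (-c * t ^ 2)) := by ring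

lemma integrableOn_Ioi_exp_neg_mul_sq_smul (hfm : AEStronglyMeasurable f (volume.restrict (.Ioi T)))
    (hf : ∀ t, T < t → ‖f t‖ ≤ K / t) (hc : 0 < c) (hT : 0 < T) :
    IntegrableOn (fun t ↦ exp (-c * t ^ 2) • f t) (.Ioi T) := by
  have hexp : Continuous fun t : ℝ ↦ exp (-c * t ^ 2) := by fun_prop
  refine ((integrable_mul_exp_neg_mul_sq hc).const_mul (K / T ^ 2)).integrableOn.mono'
    (hexp.aestronglyMeasurable.smul hfm) ?_
  filter_upwards [ae_restrict_mem measurableSet_Ioi] with t ht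
  exact norm_exp_neg_mul_sq_smul_le hT (le_of_lt ht) (hf t ht)

lemma norm_integral_Ioi_exp_neg_mul_sq_smul_le (hf : ∀ t, T < t → ‖f t‖ ≤ K / t) (hc : 0 < c)
    (hT : 0 < T) : ‖∫ t in Set.Ioi T, exp (-c * t ^ 2) • f t‖ ≤ K / (2 * (c * T ^ 2)) := by
  have hK : 0 ≤ K := nonneg_of_norm_le_div (by positivity) (hf (T + 1) (lt_add_one T))
  calc ‖∫ t in Set.Ioi T, exp (-c * t ^ 2) • f t‖
      ≤ ∫ t in Set.Ioi T, K / T ^ 2 * (t * exp (-c * t ^ 2)) := by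
        refine norm_integral_le_of_norm_le
          ((integrable_mul_exp_neg_mul_sq hc).const_mul _).integrableOn ?_
        filter_upwards [ae_restrict_mem measurableSet_Ioi] with t ht
        exact norm_exp_neg_mul_sq_smul_le hT (le_of_lt ht) (hf t ht)
    _ = K / (2 * (c * T ^ 2)) * exp (-c * T ^ 2) := by
        rw [integral_const_mul, integral_Ioi_mul_exp_neg_mul_sq hc]
        field_simp
    _ ≤ K / (2 * (c * T ^ 2)) :=
        mul_le_of_le_one_right (by positivity) (exp_neg_mul_sq_le_one hc.le T)

lemma norm_exp_neg_mul_sq_smul_sub_self_le {x : E} {t : ℝ} (hc : 0 ≤ c) (ht : 0 < t)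
    (hx : ‖x‖ ≤ K / t) : ‖exp (-c * t ^ 2) • x - x‖ ≤ K * (c * t) := by
  have hweight : |exp (-c * t ^ 2) - 1| ≤ c * t ^ 2 := by
    rw [abs_of_nonpos (sub_nonpos.2 (exp_neg_mul_sq_le_one hc t))]
    linarith [add_one_le_exp (-c * t ^ 2)]
  calc ‖exp (-c * t ^ 2) • x - x‖ = |exp (-c * t ^ 2) - 1| * ‖x‖ := by
        rw [← norm_eq_abs, ← norm_smul, sub_smul, one_smul]
    _ ≤ c * t ^ 2 * (K / t) := by gcongr
    _ = K * (c * t) := by field_simp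

lemma norm_integral_exp_neg_mul_sq_smul_sub_integral_le (hfi : IntervalIntegrable f volume 0 T)
    (hf : ∀ t ∈ Set.Ioc 0 T, ‖f t‖ ≤ K / t) (hc : 0 ≤ c) (hT : 0 ≤ T) :
    ‖(∫ t in 0..T, exp (-c * t ^ 2) • f t) - ∫ t in 0..T, f t‖ ≤ K * (c * T ^ 2) := by
  rw [← intervalIntegral.integral_sub (hfi.continuousOn_smul (by fun_prop)) hfi]
  calc ‖∫ t in 0..T, (exp (-c * t ^ 2) • f t - f t)‖ ≤ K * (c * T) * |T - 0| := by
        refine intervalIntegral.norm_integral_le_of_norm_le_const fun t ht ↦ ?_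
        rw [Set.uIoc_of_le hT] at ht
        have hK : 0 ≤ K := nonneg_of_norm_le_div ht.1 (hf t ht)
        refine (norm_exp_neg_mul_sq_smul_sub_self_le hc ht.1 (hf t ht)).trans ?_
        gcongr
        exact ht.2
    _ = K * (c * T ^ 2) := by
        rw [sub_zero, abs_of_nonneg hT]
        ring

theorem norm_integral_Ioi_exp_neg_mul_sq_smul_sub_integral_le
    (hfl : LocallyIntegrableOn f (.Ici 0)) (hf : ∀ t, 0 < t → ‖f t‖ ≤ K / t) (hc : 0 < c)
    (hT : 0 < T) :
    ‖(∫ t in Set.Ioi 0, exp (-c * t ^ 2) • f t) - ∫ t in 0..T, f t‖ ≤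
      K * (c * T ^ 2) + K / (2 * (c * T ^ 2)) := by
  have hfi : IntervalIntegrable f volume 0 T :=
    (hfl.integrableOn_compact_subset (Set.uIcc_of_le hT.le ▸ Set.Icc_subset_Ici_self)
      isCompact_uIcc).intervalIntegrable
  have htail : IntegrableOn (fun t ↦ exp (-c * t ^ 2) • f t) (.Ioi T) :=
    integrableOn_Ioi_exp_neg_mul_sq_smul
      (hfl.aestronglyMeasurable.mono_set fun _ ht ↦ (hT.trans ht).le)
      (fun t ht ↦ hf t (hT.trans ht)) hc hT
  rw [← intervalIntegral.integral_interval_add_Ioi' (hfi.continuousOn_smul (by fun_prop)) htail,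
    add_sub_right_comm]
  exact norm_add_le_of_le
    (norm_integral_exp_neg_mul_sq_smul_sub_integral_le hfi (fun t ht ↦ hf t ht.1) hc.le hT.le)
    (norm_integral_Ioi_exp_neg_mul_sq_smul_le (fun t ht ↦ hf t (hT.trans ht)) hc hT)

theorem tendsto_inv_log_smul_integral_exp_neg_mul_sq_smul {L : E}
    (hfl : LocallyIntegrableOn f (.Ici 0)) (hf : ∀ t, 0 < t → ‖f t‖ ≤ K / t)
    (hL : Tendsto (fun T ↦ (log T)⁻¹ • ∫ t in 0..T, f t) atTop (𝓝 L)) :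
    Tendsto (fun c ↦ (log (1 / c))⁻¹ • ∫ t in Set.Ioi 0, exp (-c * t ^ 2) • f t) (𝓝[>] 0)
      (𝓝 ((1 / 2 : ℝ) • L)) := by
  have hinv : Tendsto (fun c : ℝ ↦ 1 / c) (𝓝[>] 0) atTop := by
    simpa only [one_div] using tendsto_inv_nhdsGT_zero
  have hcutoff : Tendsto (fun c ↦ (log (1 / c))⁻¹ • ∫ t in 0..√(1 / c), f t) (𝓝[>] 0)
      (𝓝 ((1 / 2 : ℝ) • L)) := by
    refine ((hL.comp (tendsto_sqrt_atTop.comp hinv)).const_smul (1 / 2 : ℝ)).congr' ?_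
    filter_upwards [self_mem_nhdsWithin] with c (hc : 0 < c)
    simp only [Function.comp_apply, log_sqrt (one_div_pos.2 hc).le, smul_smul]
    congr 1
    field_simp
  refine hcutoff.congr_dist (squeeze_zero' (.of_forall fun _ ↦ dist_nonneg) ?_
    ((tendsto_log_atTop.comp hinv).const_div_atTop (K * 1 + K / (2 * 1))))
  filter_upwards [Ioo_mem_nhdsGT one_pos] with c ⟨hc, hc₁⟩
  have hlog : 0 < log (1 / c) := log_pos (one_lt_one_div hc hc₁)
  have hscale : c * √(1 / c) ^ 2 = 1 := by
    rw [sq_sqrt (one_div_pos.2 hc).le, mul_one_div_cancel hc.ne']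
  have hbound := norm_integral_Ioi_exp_neg_mul_sq_smul_sub_integral_le hfl hf hc
    (sqrt_pos.2 (one_div_pos.2 hc))
  rw [hscale] at hbound
  rw [dist_comm, dist_eq_norm, ← smul_sub, norm_smul, norm_inv, norm_of_nonneg hlog.le,
    inv_mul_eq_div]
  exact div_le_div_of_nonneg_right hbound hlog.le

end GaussianCutoff

section Arsinh

variable {a b : ℝ}

lemma tendsto_arsinh_sub_log : Tendsto (fun x ↦ arsinh x - log x) atTop (𝓝 (log 2)) := by
  have hlim : Tendsto (fun x : ℝ ↦ 1 + √(1 + x⁻¹ ^ 2)) atTop (𝓝 2) := by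
    simpa [one_add_one_eq_two] using
      (((tendsto_inv_atTop_zero (𝕜 := ℝ)).pow 2).const_add 1).sqrt.const_add 1
  refine (hlim.log two_ne_zero).congr' ?_
  filter_upwards [eventually_gt_atTop 0] with x hx
  have hroot : √(1 + x ^ 2) = x * √(1 + x⁻¹ ^ 2) := by
    rw [← sqrt_sq hx.le, ← sqrt_mul (sq_nonneg x), sqrt_sq hx.le]
    congr 1
    field_simp
    ring
  rw [arsinh, hroot, ← mul_one_add, log_mul hx.ne' (by positivity), add_sub_cancel_left]

lemma tendsto_arsinh_mul_div_log (hb : 0 < b) :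
    Tendsto (fun x ↦ arsinh (b * x) / log x) atTop (𝓝 1) := by
  have hsub : Tendsto (fun x ↦ arsinh (b * x) - log (b * x) + log b) atTop (𝓝 (log 2 + log b)) :=
    (tendsto_arsinh_sub_log.comp (tendsto_id.const_mul_atTop hb)).add_const _
  have hquot := (hsub.div_atTop tendsto_log_atTop).add_const 1
  rw [zero_add] at hquot
  refine hquot.congr' ?_
  filter_upwards [eventually_gt_atTop 1] with x hx
  have hlog : log x ≠ 0 := (log_pos hx).ne'
  rw [log_mul hb.ne' (by positivity)]
  field_simp
  ring

lemma continuous_inv_sqrt_one_add_mul_sq (ha : 0 ≤ a) :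
    Continuous fun t : ℝ ↦ (√(1 + a * t ^ 2))⁻¹ :=
  Continuous.inv₀ (by fun_prop) fun t ↦ by positivity

lemma inv_sqrt_one_add_mul_sq_le (ha : 0 < a) {t : ℝ} (ht : 0 < t) :
    (√(1 + a * t ^ 2))⁻¹ ≤ (√a)⁻¹ / t := by
  have hle : √a * t ≤ √(1 + a * t ^ 2) := by
    refine le_sqrt_of_sq_le ?_
    rw [mul_pow, sq_sqrt ha.le]
    exact le_add_of_nonneg_left zero_le_one
  rw [div_eq_mul_inv, ← mul_inv]
  exact inv_anti₀ (by positivity) hle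

lemma integral_inv_sqrt_one_add_mul_sq (ha : 0 < a) (T : ℝ) :
    ∫ t in 0..T, (√(1 + a * t ^ 2))⁻¹ = arsinh (√a * T) / √a := by
  have hderiv (t : ℝ) :
      HasDerivAt (fun t ↦ arsinh (√a * t) / √a) (√(1 + a * t ^ 2))⁻¹ t := by
    refine (((hasDerivAt_id t).const_mul √a).arsinh.div_const √a).congr_deriv ?_
    simp only [id, mul_one, mul_pow, smul_eq_mul, sq_sqrt ha.le]
    field_simp
  rw [intervalIntegral.integral_eq_sub_of_hasDerivAt (fun t _ ↦ hderiv t)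
    ((continuous_inv_sqrt_one_add_mul_sq ha.le).intervalIntegrable _ _), mul_zero, arsinh_zero,
    zero_div, sub_zero]

lemma tendsto_integral_inv_sqrt_one_add_mul_sq_div_log (ha : 0 < a) :
    Tendsto (fun T ↦ (∫ t in 0..T, (√(1 + a * t ^ 2))⁻¹) / log T) atTop (𝓝 (1 / √a)) := by
  simpa only [integral_inv_sqrt_one_add_mul_sq ha, div_right_comm] using
    (tendsto_arsinh_mul_div_log (sqrt_pos.2 ha)).div_const √a

end Arsinh

theorem kernel_log_asymptotics_general {a : ℝ} (ha : 0 < a) :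
    Tendsto (fun c ↦ (∫ t in Set.Ioi 0, exp (-c * t ^ 2) / √(1 + a * t ^ 2)) / log (1 / c))
      (𝓝[>] 0) (𝓝 (1 / (2 * √a))) := by
  have hbound (t : ℝ) (ht : 0 < t) : ‖(√(1 + a * t ^ 2))⁻¹‖ ≤ (√a)⁻¹ / t := by
    rw [norm_of_nonneg (by positivity)]
    exact inv_sqrt_one_add_mul_sq_le ha ht
  have hpartial : Tendsto (fun T ↦ (log T)⁻¹ • ∫ t in 0..T, (√(1 + a * t ^ 2))⁻¹) atTop
      (𝓝 (1 / √a)) := by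
    simpa only [smul_eq_mul, inv_mul_eq_div] using
      tendsto_integral_inv_sqrt_one_add_mul_sq_div_log ha
  simpa only [smul_eq_mul, inv_mul_eq_div, ← div_eq_mul_inv, one_div_mul_one_div] using
    tendsto_inv_log_smul_integral_exp_neg_mul_sq_smul
      ((continuous_inv_sqrt_one_add_mul_sq ha.le).locallyIntegrable.locallyIntegrableOn _)
      hbound hpartial

theorem kernel_log_asymptotics :
    Tendsto
      (fun c : ℝ =>
        (∫ t in Set.Ioi (0 : ℝ), Real.exp (-c * t ^ 2) / Real.sqrt (1 + 2 * t ^ 2)) /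
          Real.log (1 / c))
      (𝓝[>] 0) (𝓝 (1 / (2 * Real.sqrt 2))) :=
  kernel_log_asymptotics_general two_pos
end

section
/- For every β > 0 and all a, b ∈ ℝ², I_β(a,b) = ∫_ℝ √(π/(1 + 2t²)) · (β/(β + 2t²)) · e^{-(β t²/(β + 2t²))·|a - b|²} dt. -/
open Real MeasureTheory

/-- The normalized 2d Gaussian `δ_{a,β}` evaluated at `(x₁, x₂) ∈ ℝ²`. -/
noncomputable def deltaGauss2 (β : ℝ) (a : EuclideanSpace ℝ (Fin 2)) (x₁ x₂ : ℝ) : ℝ :=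
  (β / π) * Real.exp (-β * ((x₁ - a 0) ^ 2 + (x₂ - a 1) ^ 2))

/-- The six-dimensional Coulomb-kernel integral `I_β(a,b)` of Appendix A. -/
noncomputable def Ibeta (β : ℝ) (a b : EuclideanSpace ℝ (Fin 2)) : ℝ :=
  ∫ p : EuclideanSpace ℝ (Fin 3) × EuclideanSpace ℝ (Fin 3),
    deltaGauss2 β a (p.1 0) (p.1 1) * Real.exp (-(p.1 2) ^ 2) *
      (deltaGauss2 β b (p.2 0) (p.2 1) * Real.exp (-(p.2 2) ^ 2)) / ‖p.1 - p.2‖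

/-!
For `r > 0` one has `1 / r = π^{-1/2} ∫ exp (-t² r²) dt`. Inserting this for `r = |x - x̃|` and
exchanging the integrals (everything is nonnegative) leaves, for each fixed `t`, the integral of a
Gaussian on `ℝ³ × ℝ³` in which distinct coordinate directions do not interact. It is therefore a
product of three Gaussian integrals over `ℝ²`, each evaluated by completing the square twice. The
two planar directions give the factor `β / (β + 2t²)` and the exponential in `|a - b|²`; the axial
direction and the `π^{-1/2}` give the square root.
-/

section Tonelli

variable {α β : Type*} [MeasurableSpace α] [MeasurableSpace β] {μ : Measure α} {ν : Measure β}

lemma integral_integral_eq_toReal_lintegral_lintegral [SFinite ν] {f : α → β → ℝ}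
    (hf : AEStronglyMeasurable (Function.uncurry f) (μ.prod ν)) (hf₀ : ∀ x y, 0 ≤ f x y)
    (hfi : ∀ᵐ x ∂μ, Integrable (f x) ν) :
    ∫ x, ∫ y, f x y ∂ν ∂μ = (∫⁻ x, ∫⁻ y, ENNReal.ofReal (f x y) ∂ν ∂μ).toReal := by
  rw [integral_eq_lintegral_of_nonneg_ae (ae_of_all _ fun x ↦ integral_nonneg (hf₀ x))
    hf.integral_prod_right']
  refine congrArg ENNReal.toReal (lintegral_congr_ae ?_)
  filter_upwards [hfi] with x hx
  exact ofReal_integral_eq_lintegral_ofReal hx (ae_of_all _ (hf₀ x))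

lemma integral_integral_swap_of_nonneg [SFinite μ] [SFinite ν] {f : α → β → ℝ}
    (hf : AEStronglyMeasurable (Function.uncurry f) (μ.prod ν)) (hf₀ : ∀ x y, 0 ≤ f x y)
    (hf₁ : ∀ᵐ x ∂μ, Integrable (f x) ν) (hf₂ : ∀ᵐ y ∂ν, Integrable (fun x ↦ f x y) μ) :
    ∫ x, ∫ y, f x y ∂ν ∂μ = ∫ y, ∫ x, f x y ∂μ ∂ν := by
  rw [integral_integral_eq_toReal_lintegral_lintegral hf hf₀ hf₁,
    integral_integral_eq_toReal_lintegral_lintegral hf.prod_swap (fun y x ↦ hf₀ x y) hf₂,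
    lintegral_lintegral_swap hf.aemeasurable.ennreal_ofReal]

end Tonelli

section InverseAsGaussian

lemma integrable_exp_neg_sq_mul_sq {r : ℝ} (hr : r ≠ 0) :
    Integrable fun t : ℝ ↦ exp (-(t ^ 2 * r ^ 2)) := by
  simpa only [neg_mul, mul_comm (r ^ 2)] using integrable_exp_neg_mul_sq (sq_pos_of_ne_zero hr)

lemma inv_eq_integral_exp_neg_sq_mul_sq {r : ℝ} (hr : 0 < r) :
    r⁻¹ = (√π)⁻¹ * ∫ t : ℝ, exp (-(t ^ 2 * r ^ 2)) := by
  have gaussian : ∫ t : ℝ, exp (-(t ^ 2 * r ^ 2)) = √π / r := by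
    simp_rw [mul_comm _ (r ^ 2), ← neg_mul]
    rw [integral_gaussian, sqrt_div pi_pos.le, sqrt_sq hr.le]
  rw [gaussian]
  field_simp

-- If `f / r` is not integrable, then both sides are the junk value `0`.
lemma integral_div_eq_integral_integral_mul_exp {α : Type*} [MeasurableSpace α] {μ : Measure α}
    [SFinite μ] {f r : α → ℝ} (hf : Integrable f μ) (hf₀ : ∀ x, 0 ≤ f x)
    (hr : AEStronglyMeasurable r μ) (hr₀ : ∀ᵐ x ∂μ, 0 < r x) :
    ∫ x, f x / r x ∂μ = (√π)⁻¹ * ∫ t : ℝ, ∫ x, f x * exp (-(t ^ 2 * r x ^ 2)) ∂μ := by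
  have exp_measurable (t : ℝ) : AEStronglyMeasurable (fun x ↦ exp (-(t ^ 2 * r x ^ 2))) μ :=
    continuous_exp.comp_aestronglyMeasurable ((hr.pow 2).const_mul _).neg
  have joint_measurable : AEStronglyMeasurable
      (Function.uncurry fun x (t : ℝ) ↦ f x * exp (-(t ^ 2 * r x ^ 2))) (μ.prod volume) :=
    hf.1.comp_fst.mul (continuous_exp.comp_aestronglyMeasurable
      (((by fun_prop : Continuous fun t : ℝ ↦ t ^ 2).aestronglyMeasurable.comp_snd).mul
        (hr.comp_fst.pow 2)).neg)
  have integrable_left : ∀ᵐ x ∂μ, Integrable fun t : ℝ ↦ f x * exp (-(t ^ 2 * r x ^ 2)) := by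
    filter_upwards [hr₀] with x hx
    exact (integrable_exp_neg_sq_mul_sq hx.ne').const_mul _
  have integrable_right (t : ℝ) : Integrable (fun x ↦ f x * exp (-(t ^ 2 * r x ^ 2))) μ := by
    refine hf.mul_bdd (c := 1) (exp_measurable t) (ae_of_all _ fun x ↦ ?_)
    rw [norm_eq_abs, abs_exp, exp_le_one_iff, neg_nonpos]
    positivity
  calc ∫ x, f x / r x ∂μ
      = ∫ x, (√π)⁻¹ * (∫ t : ℝ, f x * exp (-(t ^ 2 * r x ^ 2))) ∂μ := by
        refine integral_congr_ae ?_
        filter_upwards [hr₀] with x hx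
        rw [div_eq_mul_inv, inv_eq_integral_exp_neg_sq_mul_sq hx, integral_const_mul, mul_left_comm]
    _ = (√π)⁻¹ * ∫ t : ℝ, ∫ x, f x * exp (-(t ^ 2 * r x ^ 2)) ∂μ := by
        rw [integral_const_mul, integral_integral_swap_of_nonneg joint_measurable
          (fun x t ↦ mul_nonneg (hf₀ x) (exp_pos _).le) integrable_left
          (ae_of_all _ integrable_right)]

end InverseAsGaussian

lemma ae_prod_fst_ne_snd {α : Type*} [MeasurableSpace α] [MeasurableEq α] (μ ν : Measure α)
    [SFinite ν] [NullSingletonClass ν] : ∀ᵐ p ∂μ.prod ν, p.1 ≠ p.2 := by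
  refine (Measure.ae_prod_iff_ae_ae measurableSet_diagonal.compl).2 ?_
  exact ae_of_all _ fun x ↦ (Measure.ae_ne ν x).mono fun _ h ↦ h.symm

section CoupledGaussian

/-- The Gaussian on `ℝ²` with exponents `c`, `d` and centers `A`, `B` in the two variables, coupled
by `exp (-s (x - y)²)`: the factor that one coordinate direction contributes once the Coulomb kernel
is replaced by a Gaussian in the distance. -/
noncomputable def coupledGaussian (c d s A B : ℝ) (p : ℝ × ℝ) : ℝ :=
  exp (-(c * (p.1 - A) ^ 2 + d * (p.2 - B) ^ 2 + s * (p.1 - p.2) ^ 2))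

lemma integral_exp_neg_mul_sq_add_mul_sq {c s : ℝ} (hcs : 0 < c + s) (A B : ℝ) :
    ∫ y : ℝ, exp (-(c * (y - A) ^ 2 + s * (y - B) ^ 2)) =
      √(π / (c + s)) * exp (-(c * s / (c + s) * (A - B) ^ 2)) := by
  have complete_square (y : ℝ) : exp (-(c * (y - A) ^ 2 + s * (y - B) ^ 2)) =
      exp (-(c + s) * (y - (c * A + s * B) / (c + s)) ^ 2) *
        exp (-(c * s / (c + s) * (A - B) ^ 2)) := by
    rw [← exp_add]
    congr 1
    field_simp
    ring
  simp_rw [complete_square]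
  rw [integral_mul_const, integral_sub_right_eq_self (fun y ↦ exp (-(c + s) * y ^ 2)),
    integral_gaussian]

variable {c d s : ℝ}

lemma integrable_coupledGaussian (hc : 0 < c) (hd : 0 < d) (hs : 0 ≤ s) (A B : ℝ) :
    Integrable (coupledGaussian c d s A B) := by
  have uncoupled : Integrable fun p : ℝ × ℝ ↦ exp (-c * (p.1 - A) ^ 2) * exp (-d * (p.2 - B) ^ 2) :=
    ((integrable_exp_neg_mul_sq hc).comp_sub_right A).mul_prod
      ((integrable_exp_neg_mul_sq hd).comp_sub_right B)
  refine uncoupled.mono' (by unfold coupledGaussian; fun_prop) (ae_of_all _ fun p ↦ ?_)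
  rw [coupledGaussian, norm_eq_abs, abs_exp, ← exp_add, exp_le_exp]
  linarith [mul_nonneg hs (sq_nonneg (p.1 - p.2))]

lemma integral_coupledGaussian (hc : 0 < c) (hd : 0 < d) (hs : 0 ≤ s) (A B : ℝ) :
    ∫ p, coupledGaussian c d s A B p =
      π / √(c * d + (c + d) * s) *
        exp (-(c * d * s / (c * d + (c + d) * s) * (A - B) ^ 2)) := by
  have inner (x : ℝ) : ∫ y, coupledGaussian c d s A B (x, y) =
      √(π / (d + s)) * exp (-(c * (x - A) ^ 2 + d * s / (d + s) * (x - B) ^ 2)) := by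
    have split (y : ℝ) : coupledGaussian c d s A B (x, y) =
        exp (-(c * (x - A) ^ 2)) * exp (-(d * (y - B) ^ 2 + s * (y - x) ^ 2)) := by
      rw [coupledGaussian, ← exp_add]
      ring_nf
    simp_rw [split]
    rw [integral_const_mul, integral_exp_neg_mul_sq_add_mul_sq (by positivity), mul_left_comm,
      ← exp_add]
    ring_nf
  have prefactor : π / (d + s) * (π / (c + d * s / (d + s))) =
      π ^ 2 / (c * d + (c + d) * s) := by
    field_simp
    ring
  have exponent : c * (d * s / (d + s)) / (c + d * s / (d + s)) =
      c * d * s / (c * d + (c + d) * s) := by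
    field_simp
    ring
  rw [Measure.volume_eq_prod, integral_prod _ (integrable_coupledGaussian hc hd hs A B)]
  simp_rw [inner]
  rw [integral_const_mul, integral_exp_neg_mul_sq_add_mul_sq (by positivity), ← mul_assoc,
    ← sqrt_mul (by positivity), prefactor, exponent, sqrt_div (by positivity), sqrt_sq pi_pos.le]

end CoupledGaussian

section CoordinatePairs

variable {ι : Type*} [Fintype ι]

/-- The coordinatewise pairing of two points of `ℝ^ι`, as an `ι`-indexed family of points of `ℝ²`;
it is what turns a function of `(x i, y i)` in each direction `i` into a product function. -/
def coordPairEquiv (ι : Type*) : (EuclideanSpace ℝ ι × EuclideanSpace ℝ ι) ≃ᵐ (ι → ℝ × ℝ) :=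
  ((MeasurableEquiv.toLp 2 (ι → ℝ)).symm.prodCongr (MeasurableEquiv.toLp 2 (ι → ℝ)).symm).trans
    (MeasurableEquiv.arrowProdEquivProdArrow ℝ ℝ ι).symm

lemma measurePreserving_coordPairEquiv : MeasurePreserving (coordPairEquiv ι) :=
  (volume_measurePreserving_arrowProdEquivProdArrow ℝ ℝ ι).symm.comp
    ((PiLp.volume_preserving_ofLp ι).prod (PiLp.volume_preserving_ofLp ι))

variable {𝕜 : Type*} [RCLike 𝕜]

lemma integrable_prod_coord_pair {f : ι → ℝ × ℝ → 𝕜} (hf : ∀ i, Integrable (f i)) :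
    Integrable fun p : EuclideanSpace ℝ ι × EuclideanSpace ℝ ι ↦ ∏ i, f i (p.1 i, p.2 i) :=
  measurePreserving_coordPairEquiv.integrable_comp_of_integrable (Integrable.fintype_prod hf)

lemma integral_prod_coord_pair (f : ι → ℝ × ℝ → 𝕜) :
    ∫ p : EuclideanSpace ℝ ι × EuclideanSpace ℝ ι, ∏ i, f i (p.1 i, p.2 i) = ∏ i, ∫ q, f i q :=
  (measurePreserving_coordPairEquiv.integral_comp' fun q : ι → ℝ × ℝ ↦ ∏ i, f i (q i)).trans
    (integral_fintype_prod_volume_eq_prod f)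

end CoordinatePairs

section CoulombEnergy

variable {ι : Type*} [Fintype ι]

/-- The unnormalized Gaussian on `ℝ^ι` centered at `A`, with its own exponent `c i` along each
coordinate axis. -/
noncomputable def axisGaussian (c A : ι → ℝ) (x : EuclideanSpace ℝ ι) : ℝ :=
  exp (-∑ i, c i * (x i - A i) ^ 2)

lemma axisGaussian_mul_axisGaussian_mul_exp (c d A B : ι → ℝ) (s : ℝ) (x y : EuclideanSpace ℝ ι) :
    axisGaussian c A x * axisGaussian d B y * exp (-(s * ‖x - y‖ ^ 2)) =
      ∏ i, coupledGaussian (c i) (d i) s (A i) (B i) (x i, y i) := by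
  simp only [axisGaussian, coupledGaussian, EuclideanSpace.norm_sq_eq, PiLp.sub_apply, norm_eq_abs,
    sq_abs, Finset.mul_sum, ← exp_sum, ← exp_add, Finset.sum_neg_distrib, Finset.sum_add_distrib,
    neg_add]

variable {c d : ι → ℝ}

lemma integral_axisGaussian_mul_axisGaussian_mul_exp (hc : ∀ i, 0 < c i) (hd : ∀ i, 0 < d i)
    {s : ℝ} (hs : 0 ≤ s) (A B : ι → ℝ) :
    ∫ p : EuclideanSpace ℝ ι × EuclideanSpace ℝ ι,
        axisGaussian c A p.1 * axisGaussian d B p.2 * exp (-(s * ‖p.1 - p.2‖ ^ 2)) =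
      ∏ i, (π / √(c i * d i + (c i + d i) * s) *
        exp (-(c i * d i * s / (c i * d i + (c i + d i) * s) * (A i - B i) ^ 2))) := by
  simp_rw [axisGaussian_mul_axisGaussian_mul_exp]
  rw [integral_prod_coord_pair fun i ↦ coupledGaussian (c i) (d i) s (A i) (B i)]
  exact Finset.prod_congr rfl fun i _ ↦ integral_coupledGaussian (hc i) (hd i) hs (A i) (B i)

lemma integrable_axisGaussian_mul_axisGaussian (hc : ∀ i, 0 < c i) (hd : ∀ i, 0 < d i)
    (A B : ι → ℝ) :
    Integrable fun p : EuclideanSpace ℝ ι × EuclideanSpace ℝ ι ↦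
      axisGaussian c A p.1 * axisGaussian d B p.2 := by
  have uncoupled (p : EuclideanSpace ℝ ι × EuclideanSpace ℝ ι) :
      axisGaussian c A p.1 * axisGaussian d B p.2 =
        ∏ i, coupledGaussian (c i) (d i) 0 (A i) (B i) (p.1 i, p.2 i) := by
    rw [← axisGaussian_mul_axisGaussian_mul_exp, zero_mul, neg_zero, exp_zero, mul_one]
  simp_rw [uncoupled]
  exact integrable_prod_coord_pair fun i ↦
    integrable_coupledGaussian (hc i) (hd i) le_rfl (A i) (B i)

-- If `ι` has one element, both integrals diverge and the identity reads `0 = 0`.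
theorem integral_axisGaussian_mul_axisGaussian_div_norm_sub [Nonempty ι] (hc : ∀ i, 0 < c i)
    (hd : ∀ i, 0 < d i) (A B : ι → ℝ) :
    ∫ p : EuclideanSpace ℝ ι × EuclideanSpace ℝ ι,
        axisGaussian c A p.1 * axisGaussian d B p.2 / ‖p.1 - p.2‖ =
      (√π)⁻¹ * ∫ t : ℝ, ∏ i, (π / √(c i * d i + (c i + d i) * t ^ 2) *
        exp (-(c i * d i * t ^ 2 / (c i * d i + (c i + d i) * t ^ 2) * (A i - B i) ^ 2))) := by
  have norm_sub_pos : ∀ᵐ p : EuclideanSpace ℝ ι × EuclideanSpace ℝ ι, 0 < ‖p.1 - p.2‖ :=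
    (ae_prod_fst_ne_snd volume volume).mono fun p hp ↦ norm_pos_iff.2 (sub_ne_zero.2 hp)
  rw [integral_div_eq_integral_integral_mul_exp
    (integrable_axisGaussian_mul_axisGaussian hc hd A B)
    (fun p ↦ mul_nonneg (exp_pos _).le (exp_pos _).le) (by fun_prop) norm_sub_pos]
  simp_rw [integral_axisGaussian_mul_axisGaussian_mul_exp hc hd (sq_nonneg _)]

end CoulombEnergy

lemma deltaGauss2_mul_exp_eq_axisGaussian (β : ℝ) (a : EuclideanSpace ℝ (Fin 2))
    (x : EuclideanSpace ℝ (Fin 3)) :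
    deltaGauss2 β a (x 0) (x 1) * exp (-(x 2) ^ 2) =
      β / π * axisGaussian ![β, β, 1] ![a 0, a 1, 0] x := by
  simp only [deltaGauss2, axisGaussian, Fin.sum_univ_three, Matrix.cons_val, mul_assoc, ← exp_add]
  ring_nf

lemma Ibeta_eq_integral_axisGaussian (β : ℝ) (a b : EuclideanSpace ℝ (Fin 2)) :
    Ibeta β a b = (β / π) ^ 2 * ∫ p : EuclideanSpace ℝ (Fin 3) × EuclideanSpace ℝ (Fin 3),
      axisGaussian ![β, β, 1] ![a 0, a 1, 0] p.1 * axisGaussian ![β, β, 1] ![b 0, b 1, 0] p.2 /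
        ‖p.1 - p.2‖ := by
  simp_rw [Ibeta, deltaGauss2_mul_exp_eq_axisGaussian]
  rw [← integral_const_mul]
  congr with p
  ring

lemma planar_mul_axial_prefactor {β s : ℝ} (hβ : 0 < β) (hs : 0 ≤ s) :
    (β / π) ^ 2 * (√π)⁻¹ * ((π / √(β * β + (β + β) * s)) ^ 2 * (π / √(1 + 2 * s))) =
      √(π / (1 + 2 * s)) * (β / (β + 2 * s)) := by
  have sq_sqrt_pi : √π ^ 2 = π := sq_sqrt pi_pos.le
  rw [div_pow π, sq_sqrt (by positivity), sqrt_div pi_pos.le]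
  field_simp
  rw [sq_sqrt_pi]
  ring

lemma planar_exponent {β s : ℝ} (hβ : β ≠ 0) :
    β * β * s / (β * β + (β + β) * s) = β * s / (β + 2 * s) := by
  rw [← mul_div_mul_left (β * s) (β + 2 * s) hβ]
  ring_nf

theorem Ibeta_eq_one_dim_integral (β : ℝ) (hβ : 0 < β)
    (a b : EuclideanSpace ℝ (Fin 2)) :
    Ibeta β a b =
      ∫ t : ℝ, Real.sqrt (π / (1 + 2 * t ^ 2)) * (β / (β + 2 * t ^ 2)) *
        Real.exp (-(β * t ^ 2 / (β + 2 * t ^ 2)) * ‖a - b‖ ^ 2) := by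
  have exponents_pos : ∀ i, 0 < ![β, β, 1] i := by
    simp [Fin.forall_fin_succ, hβ]
  rw [Ibeta_eq_integral_axisGaussian,
    integral_axisGaussian_mul_axisGaussian_div_norm_sub exponents_pos exponents_pos, ← mul_assoc,
    ← integral_const_mul]
  congr with t
  have axial_exp (k : ℝ) : exp (-(k * (0 - 0) ^ 2)) = 1 := by simp
  have planar_norm_sq : ‖a - b‖ ^ 2 = (a 0 - b 0) ^ 2 + (a 1 - b 1) ^ 2 := by
    simp only [EuclideanSpace.norm_sq_eq, Fin.sum_univ_two, PiLp.sub_apply, norm_eq_abs, sq_abs]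
  simp only [Fin.prod_univ_three, Matrix.cons_val, axial_exp, mul_one, one_add_one_eq_two,
    planar_exponent hβ.ne']
  rw [← planar_mul_axial_prefactor hβ (sq_nonneg t), planar_norm_sq, neg_mul, mul_add, neg_add,
    exp_add]
  ring
end

section
/- For every a ∈ ℝ³ with a ≠ 0, ∫_{ℝ³} e^{-|x|²} / (|x|² · |a - x|) dx = (4π/|a|) ∫_0^{|a|} e^{-s²} ds + 4π ∫_{|a|}^∞ e^{-s²}/s ds. -/
open Real MeasureTheory

/-!
Describe `x` by its norm `r` and its height `z` along `a`. By the hat-box theorem of Archimedes, the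
part of the sphere of radius `r` between heights `z` and `z + dz` has area `2 π r dz`. On this
sphere `‖a - x‖ ^ 2 = ‖a‖ ^ 2 - 2 ‖a‖ z + r ^ 2` is affine in `z`, so `1 / ‖a - x‖` can be
integrated explicitly in `z`; its total over the sphere is `4 π r ^ 2 / max ‖a‖ r`, the Newtonian
potential of a spherical shell. The integral over `r` against a radial density then splits at
`r = ‖a‖`.
-/

section RadialIntegrals

open Set Metric Module
open scoped ENNReal RealInnerProductSpace

theorem lintegral_comp_norm_addHaar {V : Type*} [NormedAddCommGroup V] [NormedSpace ℝ V]
    [Nontrivial V] [FiniteDimensional ℝ V] [MeasurableSpace V] [BorelSpace V]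
    (μ : Measure V) [μ.IsAddHaarMeasure] {f : ℝ → ℝ≥0∞} (hf : Measurable f) :
    ∫⁻ x, f ‖x‖ ∂μ = finrank ℝ V * μ (ball 0 1) *
      ∫⁻ r in Ioi (0 : ℝ), ENNReal.ofReal (r ^ (finrank ℝ V - 1)) * f r :=
  calc
    ∫⁻ x, f ‖x‖ ∂μ = ∫⁻ x : ({(0)}ᶜ : Set V), f ‖x.1‖ ∂(μ.comap (↑)) := by
      rw [lintegral_subtype_comap (measurableSet_singleton _).compl fun x ↦ f ‖x‖,
        restrict_compl_singleton]
    _ = ∫⁻ p, f p.2 ∂μ.toSphere.prod (.volumeIoiPow (finrank ℝ V - 1)) := by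
      simpa using μ.measurePreserving_homeomorphUnitSphereProd.lintegral_comp
        (f := fun p ↦ f p.2) (by fun_prop)
    _ = μ.toSphere univ * ∫⁻ r, f r ∂.volumeIoiPow (finrank ℝ V - 1) := by
      rw [lintegral_prod _ (by fun_prop)]
      simp only [lintegral_const, mul_comm]
    _ = _ := by
      rw [μ.toSphere_apply_univ, Measure.volumeIoiPow,
        lintegral_withDensity_eq_lintegral_mul _ (by fun_prop) (by fun_prop),
        ← lintegral_subtype_comap measurableSet_Ioi]
      rfl

theorem image_sqrt_sq_add_sq_Ioi (z : ℝ) :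
    (fun ρ : ℝ ↦ √(z ^ 2 + ρ ^ 2)) '' Ioi 0 = Ioi |z| := by
  ext r
  simp only [mem_image, mem_Ioi]
  constructor
  · rintro ⟨ρ, hρ, rfl⟩
    exact lt_sqrt_of_sq_lt (by rw [sq_abs]; exact lt_add_of_pos_right _ (pow_pos hρ 2))
  · intro hr
    have hr₀ : 0 < r := (abs_nonneg z).trans_lt hr
    have hzr : 0 < r ^ 2 - z ^ 2 := sub_pos.2 (sq_lt_sq.2 (hr.trans_le (le_abs_self r)))
    exact ⟨√(r ^ 2 - z ^ 2), sqrt_pos.2 hzr, by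
      rw [sq_sqrt hzr.le, add_sub_cancel, sqrt_sq hr₀.le]⟩

theorem lintegral_Ioi_ofReal_mul_comp_sqrt_sq_add_sq (f : ℝ → ℝ≥0∞) (z : ℝ) :
    ∫⁻ ρ in Ioi (0 : ℝ), ENNReal.ofReal ρ * f (√(z ^ 2 + ρ ^ 2)) =
      ∫⁻ r in Ioi |z|, ENNReal.ofReal r * f r := by
  have radicand_pos : ∀ ρ ∈ Ioi (0 : ℝ), 0 < z ^ 2 + ρ ^ 2 := fun ρ (hρ : 0 < ρ) ↦ by positivity
  have hderiv : ∀ ρ ∈ Ioi (0 : ℝ), HasDerivWithinAt (fun ρ ↦ √(z ^ 2 + ρ ^ 2))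
      (ρ / √(z ^ 2 + ρ ^ 2)) (Ioi 0) ρ := fun ρ hρ ↦ by
    have hradicand : HasDerivAt (fun ρ ↦ z ^ 2 + ρ ^ 2) (2 * ρ) ρ := by
      simpa using (hasDerivAt_pow 2 ρ).const_add (z ^ 2)
    refine (hradicand.sqrt (radicand_pos ρ hρ).ne' |>.congr_deriv ?_).hasDerivWithinAt
    field_simp
  have hinj : InjOn (fun ρ : ℝ ↦ √(z ^ 2 + ρ ^ 2)) (Ioi 0) := fun ρ hρ σ hσ h ↦ by
    rw [mem_Ioi] at hρ hσ
    have hsq := (sqrt_inj (by positivity) (by positivity)).1 h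
    exact (pow_left_inj₀ hρ.le hσ.le two_ne_zero).1 (add_left_cancel hsq)
  rw [← image_sqrt_sq_add_sq_Ioi,
    lintegral_image_eq_lintegral_abs_deriv_mul measurableSet_Ioi hderiv hinj]
  refine setLIntegral_congr_fun measurableSet_Ioi fun ρ hρ ↦ ?_
  have hsqrt : 0 < √(z ^ 2 + ρ ^ 2) := sqrt_pos.2 (radicand_pos ρ hρ)
  have hρ₀ : 0 < ρ := hρ
  rw [← mul_assoc, ← ENNReal.ofReal_mul (abs_nonneg _), abs_of_pos (by positivity),
    div_mul_cancel₀ _ hsqrt.ne']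

theorem lintegral_lintegral_Ioi_abs_swap {G : ℝ → ℝ → ℝ≥0∞}
    (hG : Measurable (Function.uncurry G)) :
    ∫⁻ z, ∫⁻ r in Ioi |z|, G z r = ∫⁻ r in Ioi 0, ∫⁻ z in Ioo (-r) r, G z r := by
  have hcone : MeasurableSet {p : ℝ × ℝ | |p.1| < p.2} :=
    measurableSet_lt (by fun_prop) (by fun_prop)
  calc
    ∫⁻ z, ∫⁻ r in Ioi |z|, G z r = ∫⁻ z, ∫⁻ r, (Ioi |z|).indicator (G z) r := by
      simp only [lintegral_indicator measurableSet_Ioi]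
    _ = ∫⁻ r, ∫⁻ z, (Ioi |z|).indicator (G z) r :=
      lintegral_lintegral_swap (hG.indicator hcone).aemeasurable
    _ = ∫⁻ r, ∫⁻ z in Ioo (-r) r, G z r := by
      refine lintegral_congr fun r ↦ ?_
      rw [← lintegral_indicator measurableSet_Ioo]
      refine lintegral_congr fun z ↦ ?_
      simp only [indicator, mem_Ioi, mem_Ioo, abs_lt]
    _ = ∫⁻ r in Ioi 0, ∫⁻ z in Ioo (-r) r, G z r := by
      rw [← lintegral_indicator measurableSet_Ioi]
      refine lintegral_congr fun r ↦ ?_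
      by_cases hr : 0 < r
      · rw [indicator_of_mem (mem_Ioi.2 hr)]
      · rw [indicator_of_notMem (notMem_Ioi.2 (not_lt.1 hr)), Ioo_eq_empty (by linarith),
          Measure.restrict_empty, lintegral_zero_measure]

variable {E : Type*} [NormedAddCommGroup E] [InnerProductSpace ℝ E] [FiniteDimensional ℝ E]
  [MeasurableSpace E] [BorelSpace E] {u : E}

theorem lintegral_comp_norm_inner_eq_lintegral_orthogonal (hu : ‖u‖ = 1) {F : ℝ → ℝ → ℝ≥0∞}
    (hF : Measurable (Function.uncurry F)) :
    ∫⁻ x : E, F ‖x‖ ⟪u, x⟫ = ∫⁻ z : ℝ, ∫⁻ y : (ℝ ∙ u)ᗮ, F (√(z ^ 2 + ‖y‖ ^ 2)) z := by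
  let coords : E ≃ₗᵢ[ℝ] WithLp 2 (ℝ × (ℝ ∙ u)ᗮ) :=
    (ℝ ∙ u).orthogonalDecomposition.trans <| .withLpProdCongr 2
      (LinearIsometryEquiv.toSpanUnitSingleton u hu).symm (.refl ℝ _)
  have fst_coords (x : E) : (coords x).fst = ⟪u, x⟫ := by
    change (LinearIsometryEquiv.toSpanUnitSingleton u hu).symm
      ((ℝ ∙ u).orthogonalProjectionOnto x) = _
    rw [LinearIsometryEquiv.symm_apply_eq]
    ext
    simp [← Submodule.starProjection_unit_singleton ℝ hu x]
  have norm_eq (x : E) : ‖x‖ = √((coords x).fst ^ 2 + ‖(coords x).snd‖ ^ 2) := by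
    rw [← coords.norm_map x, WithLp.prod_norm_eq_of_L2, norm_eq_abs, sq_abs]
  have hG : Measurable fun p : ℝ × (ℝ ∙ u)ᗮ ↦ F (√(p.1 ^ 2 + ‖p.2‖ ^ 2)) p.1 :=
    hF.comp (f := fun p : ℝ × (ℝ ∙ u)ᗮ ↦ (√(p.1 ^ 2 + ‖p.2‖ ^ 2), p.1)) (by fun_prop)
  rw [← lintegral_prod _ hG.aemeasurable, ← Measure.volume_eq_prod,
    ← ((WithLp.volume_preserving_ofLp ℝ _).comp coords.measurePreserving).lintegral_comp hG]
  refine lintegral_congr fun x ↦ ?_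
  rw [norm_eq, ← fst_coords]
  rfl

/-- The hat-box theorem of Archimedes: the pushforward of volume under `x ↦ (‖x‖, ⟪u, x⟫)` has
density `2 π r` on the cone `|z| < r`. -/
theorem lintegral_comp_norm_inner (hE : finrank ℝ E = 3) (hu : ‖u‖ = 1) {F : ℝ → ℝ → ℝ≥0∞}
    (hF : Measurable (Function.uncurry F)) :
    ∫⁻ x : E, F ‖x‖ ⟪u, x⟫ = ENNReal.ofReal (2 * π) *
      ∫⁻ r in Ioi 0, ENNReal.ofReal r * ∫⁻ z in Ioo (-r) r, F r z := by
  have finrank_orthogonal : finrank ℝ (ℝ ∙ u)ᗮ = 2 := by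
    have := (ℝ ∙ u).finrank_add_finrank_orthogonal
    rw [finrank_span_singleton (norm_ne_zero_iff.1 (hu ▸ one_ne_zero)), hE] at this
    omega
  have : Nontrivial (ℝ ∙ u)ᗮ := nontrivial_of_finrank_pos (R := ℝ) (by omega)
  have polar (z : ℝ) : ∫⁻ y : (ℝ ∙ u)ᗮ, F (√(z ^ 2 + ‖y‖ ^ 2)) z =
      ENNReal.ofReal (2 * π) * ∫⁻ r in Ioi |z|, ENNReal.ofReal r * F r z := by
    have hFz : Measurable fun ρ ↦ F (√(z ^ 2 + ρ ^ 2)) z :=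
      hF.comp (f := fun ρ ↦ (√(z ^ 2 + ρ ^ 2), z)) (by fun_prop)
    rw [lintegral_comp_norm_addHaar volume hFz, finrank_orthogonal,
      InnerProductSpace.volume_ball_of_dim_even (k := 1) finrank_orthogonal,
      ← lintegral_Ioi_ofReal_mul_comp_sqrt_sq_add_sq]
    simp [ENNReal.ofReal_mul]
  have hG : Measurable (Function.uncurry fun z r ↦ ENNReal.ofReal r * F r z) :=
    (by fun_prop : Measurable fun p : ℝ × ℝ ↦ ENNReal.ofReal p.2).mul (hF.comp measurable_swap)
  rw [lintegral_comp_norm_inner_eq_lintegral_orthogonal hu hF]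
  simp only [polar]
  rw [lintegral_const_mul' _ _ ENNReal.ofReal_ne_top, lintegral_lintegral_Ioi_abs_swap hG]
  simp only [lintegral_const_mul' _ _ ENNReal.ofReal_ne_top]

theorem lintegral_Ioo_eq_ofReal_sub_of_hasDerivAt {g g' : ℝ → ℝ} {a b : ℝ} (hab : a ≤ b)
    (hcont : ContinuousOn g (Icc a b)) (hderiv : ∀ x ∈ Ioo a b, HasDerivAt g (g' x) x)
    (hnonneg : ∀ x ∈ Ioo a b, 0 ≤ g' x) :
    ∫⁻ x in Ioo a b, ENNReal.ofReal (g' x) = ENNReal.ofReal (g b - g a) := by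
  have hint := intervalIntegral.integrableOn_deriv_of_nonneg hcont hderiv hnonneg
  rw [← intervalIntegral.integral_eq_sub_of_hasDerivAt_of_le hab hcont hderiv
      ((intervalIntegrable_iff_integrableOn_Ioc_of_le hab).2 hint),
    intervalIntegral.integral_of_le hab, integral_Ioc_eq_integral_Ioo,
    ofReal_integral_eq_lintegral_ofReal (hint.mono_set Ioo_subset_Ioc_self)
      ((ae_restrict_iff' measurableSet_Ioo).2 (.of_forall hnonneg))]

theorem lintegral_Ioo_inv_sqrt_sq_sub_add_sq {s r : ℝ} (hs : 0 ≤ s) (hr : 0 < r) :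
    ∫⁻ z in Ioo (-r) r, ENNReal.ofReal (√(s ^ 2 - 2 * s * z + r ^ 2))⁻¹ =
      ENNReal.ofReal (2 * r / max s r) := by
  obtain rfl | hs := hs.eq_or_lt
  · have : 2 * r / r = r⁻¹ * (r - -r) := by ring
    simp [sqrt_sq hr.le, max_eq_right hr.le, this, ENNReal.ofReal_mul (inv_nonneg.2 hr.le)]
  have radicand_pos : ∀ z ∈ Ioo (-r) r, 0 < s ^ 2 - 2 * s * z + r ^ 2 := fun z hz ↦ by
    nlinarith [sq_nonneg (s - r), mul_pos hs (sub_pos.2 hz.2)]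
  rw [lintegral_Ioo_eq_ofReal_sub_of_hasDerivAt (g := fun z ↦ -√(s ^ 2 - 2 * s * z + r ^ 2) / s)
    (by linarith) (by fun_prop) _ fun z _ ↦ by positivity]
  · have at_right : s ^ 2 - 2 * s * r + r ^ 2 = (s - r) ^ 2 := by ring
    have at_left : s ^ 2 - 2 * s * -r + r ^ 2 = (s + r) ^ 2 := by ring
    congr 1
    rw [at_right, at_left, sqrt_sq_eq_abs, sqrt_sq (by positivity)]
    rcases le_total s r with h | h
    · rw [max_eq_right h, abs_of_nonpos (by linarith)]
      field_simp
      ring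
    · rw [max_eq_left h, abs_of_nonneg (by linarith)]
      ring
  · intro z hz
    have hradicand : HasDerivAt (fun z ↦ s ^ 2 - 2 * s * z + r ^ 2) (-(2 * s)) z := by
      simpa using (((hasDerivAt_id z).const_mul (2 * s)).const_sub (s ^ 2)).add_const (r ^ 2)
    refine ((hradicand.sqrt (radicand_pos z hz).ne').neg.div_const s).congr_deriv ?_
    field_simp

theorem exists_norm_eq_one_and_eq_norm_smul {V : Type*} [NormedAddCommGroup V] [NormedSpace ℝ V]
    [Nontrivial V] (a : V) : ∃ u : V, ‖u‖ = 1 ∧ a = ‖a‖ • u := by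
  obtain rfl | ha := eq_or_ne a 0
  · obtain ⟨u, hu⟩ := exists_norm_eq V zero_le_one
    exact ⟨u, hu, by simp⟩
  · exact ⟨‖a‖⁻¹ • a, norm_smul_inv_norm ha, (smul_inv_smul₀ (norm_ne_zero_iff.2 ha) a).symm⟩

theorem lintegral_inv_norm_sub_mul_comp_norm (hE : finrank ℝ E = 3) (a : E) {f : ℝ → ℝ≥0∞}
    (hf : Measurable f) :
    ∫⁻ x, ENNReal.ofReal ‖a - x‖⁻¹ * f ‖x‖ =
      ∫⁻ r in Ioi 0, ENNReal.ofReal (4 * π * r ^ 2 / max ‖a‖ r) * f r := by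
  have : Nontrivial E := nontrivial_of_finrank_pos (R := ℝ) (by omega)
  obtain ⟨u, hu, hau⟩ := exists_norm_eq_one_and_eq_norm_smul a
  have norm_sub_eq (x : E) : ‖a - x‖ = √(‖a‖ ^ 2 - 2 * ‖a‖ * ⟪u, x⟫ + ‖x‖ ^ 2) := by
    rw [← sqrt_sq (norm_nonneg (a - x)), norm_sub_sq_real]
    nth_rw 2 [hau]
    rw [real_inner_smul_left, mul_assoc]
  simp only [norm_sub_eq]
  rw [lintegral_comp_norm_inner hE hu
      (F := fun r z ↦ ENNReal.ofReal (√(‖a‖ ^ 2 - 2 * ‖a‖ * z + r ^ 2))⁻¹ * f r)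
      (by unfold Function.uncurry; fun_prop),
    ← lintegral_const_mul' _ _ ENNReal.ofReal_ne_top]
  refine setLIntegral_congr_fun measurableSet_Ioi fun r (hr : 0 < r) ↦ ?_
  rw [lintegral_mul_const _ (by fun_prop),
    lintegral_Ioo_inv_sqrt_sq_sub_add_sq (norm_nonneg a) hr, ← mul_assoc, ← mul_assoc,
    ← ENNReal.ofReal_mul (by positivity), ← ENNReal.ofReal_mul (by positivity)]
  congr 2
  ring

theorem map_norm_withDensity_inv_norm_sub (hE : finrank ℝ E = 3) (a : E) :
    ((volume.withDensity fun x ↦ ENNReal.ofReal ‖a - x‖⁻¹).map norm : Measure ℝ) =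
      (volume.restrict (Ioi 0)).withDensity
        fun r ↦ ENNReal.ofReal (4 * π * r ^ 2 / max ‖a‖ r) := by
  refine Measure.ext_of_lintegral _ fun f hf ↦ ?_
  rw [lintegral_map hf measurable_norm,
    lintegral_withDensity_eq_lintegral_mul _ (by fun_prop) (by fun_prop),
    lintegral_withDensity_eq_lintegral_mul _ (by fun_prop) hf]
  exact lintegral_inv_norm_sub_mul_comp_norm hE a hf

variable {G : Type*} [NormedAddCommGroup G] [NormedSpace ℝ G] {f : ℝ → G}

theorem integral_inv_norm_sub_smul_comp_norm (hE : finrank ℝ E = 3) (a : E)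
    (hf : AEStronglyMeasurable f (volume.restrict (Ioi 0))) :
    ∫ x, ‖a - x‖⁻¹ • f ‖x‖ = ∫ r in Ioi 0, (4 * π * r ^ 2 / max ‖a‖ r) • f r := by
  have hmap := map_norm_withDensity_inv_norm_sub hE a
  have hf' : AEStronglyMeasurable f
      ((volume.withDensity fun x ↦ ENNReal.ofReal ‖a - x‖⁻¹).map norm) :=
    hmap ▸ hf.mono_ac (withDensity_absolutelyContinuous _ _)
  calc
    ∫ x, ‖a - x‖⁻¹ • f ‖x‖
      = ∫ x, f ‖x‖ ∂volume.withDensity fun x ↦ ENNReal.ofReal ‖a - x‖⁻¹ := by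
      rw [integral_withDensity_eq_integral_toReal_smul (by fun_prop) (by simp)]
      simp
    _ = ∫ r, f r ∂(volume.restrict (Ioi 0)).withDensity
          fun r ↦ ENNReal.ofReal (4 * π * r ^ 2 / max ‖a‖ r) := by
      rw [← hmap, integral_map (by fun_prop) hf']
    _ = ∫ r in Ioi 0, (4 * π * r ^ 2 / max ‖a‖ r) • f r := by
      rw [integral_withDensity_eq_integral_toReal_smul (by fun_prop) (by simp)]
      refine setIntegral_congr_fun measurableSet_Ioi fun r (hr : 0 < r) ↦ ?_
      rw [ENNReal.toReal_ofReal (by positivity)]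

theorem integral_inv_norm_sub_smul_comp_norm_eq_add (hE : finrank ℝ E = 3) (a : E)
    (hf : AEStronglyMeasurable f (volume.restrict (Ioi 0)))
    (hin : IntegrableOn (fun r ↦ r ^ 2 • f r) (Ioc 0 ‖a‖))
    (hout : IntegrableOn (fun r ↦ r • f r) (Ioi ‖a‖)) :
    ∫ x, ‖a - x‖⁻¹ • f ‖x‖ = (4 * π / ‖a‖) • (∫ r in 0..‖a‖, r ^ 2 • f r) +
      (4 * π) • ∫ r in Ioi ‖a‖, r • f r := by
  have inner_shells : EqOn (fun r ↦ (4 * π * r ^ 2 / max ‖a‖ r) • f r)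
      (fun r ↦ (4 * π / ‖a‖) • r ^ 2 • f r) (Ioc 0 ‖a‖) := fun r hr ↦ by
    dsimp only
    rw [max_eq_left hr.2, smul_smul]
    ring_nf
  have outer_shells : EqOn (fun r ↦ (4 * π * r ^ 2 / max ‖a‖ r) • f r)
      (fun r ↦ (4 * π) • r • f r) (Ioi ‖a‖) := fun r (hr : ‖a‖ < r) ↦ by
    have hr₀ : r ≠ 0 := ((norm_nonneg a).trans_lt hr).ne'
    dsimp only
    rw [max_eq_right hr.le, smul_smul]
    congr 1
    field_simp
  rw [integral_inv_norm_sub_smul_comp_norm hE a hf, ← Ioc_union_Ioi_eq_Ioi (norm_nonneg a),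
    setIntegral_union (Ioc_disjoint_Ioi le_rfl) measurableSet_Ioi
      (IntegrableOn.congr_fun (hin.smul _) inner_shells.symm measurableSet_Ioc)
      (IntegrableOn.congr_fun (hout.smul _) outer_shells.symm measurableSet_Ioi),
    setIntegral_congr_fun measurableSet_Ioc inner_shells,
    setIntegral_congr_fun measurableSet_Ioi outer_shells, integral_smul, integral_smul,
    intervalIntegral.integral_of_le (norm_nonneg a)]

theorem integrable_exp_neg_sq : Integrable fun s : ℝ ↦ rexp (-s ^ 2) := by
  simpa using integrable_exp_neg_mul_sq one_pos

theorem integrableOn_Ioi_exp_neg_sq_div {c : ℝ} (hc : 0 < c) :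
    IntegrableOn (fun s ↦ rexp (-s ^ 2) / s) (Ioi c) := by
  refine (integrable_exp_neg_sq.div_const c).integrableOn.mono'
    (by fun_prop : Measurable _).aestronglyMeasurable ?_
  filter_upwards [ae_restrict_mem measurableSet_Ioi] with s (hs : c < s)
  have : 0 < s := hc.trans hs
  rw [norm_of_nonneg (by positivity)]
  gcongr

theorem coulomb_laplace_expansion_general (hE : finrank ℝ E = 3) (a : E) (ha : a ≠ 0) :
    ∫ x : E, rexp (-‖x‖ ^ 2) / (‖x‖ ^ 2 * ‖a - x‖)
      = (4 * π / ‖a‖) * (∫ s in (0 : ℝ)..‖a‖, rexp (-s ^ 2)) +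
          4 * π * ∫ s in Ioi ‖a‖, rexp (-s ^ 2) / s := by
  have hpos : 0 < ‖a‖ := norm_pos_iff.2 ha
  let f (r : ℝ) : ℝ := rexp (-r ^ 2) / r ^ 2
  have hf : Measurable f := by unfold f; fun_prop
  have sq_smul_f : EqOn (fun r ↦ r ^ 2 • f r) (fun r ↦ rexp (-r ^ 2)) (Ioi 0) :=
    fun r hr ↦ mul_div_cancel₀ _ (pow_pos hr 2).ne'
  have smul_f (r : ℝ) : r • f r = rexp (-r ^ 2) / r := by
    simp only [f, smul_eq_mul]
    field_simp
  have hin : IntegrableOn (fun r ↦ r ^ 2 • f r) (Ioc 0 ‖a‖) :=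
    integrable_exp_neg_sq.integrableOn.congr_fun (sq_smul_f.symm.mono Ioc_subset_Ioi_self)
      measurableSet_Ioc
  have hout : IntegrableOn (fun r ↦ r • f r) (Ioi ‖a‖) := by
    simpa only [smul_f] using integrableOn_Ioi_exp_neg_sq_div hpos
  calc
    ∫ x : E, rexp (-‖x‖ ^ 2) / (‖x‖ ^ 2 * ‖a - x‖) = ∫ x, ‖a - x‖⁻¹ • f ‖x‖ := by
      refine integral_congr_ae (.of_forall fun x ↦ ?_)
      simp only [f, smul_eq_mul, div_eq_mul_inv, mul_inv]
      ring
    _ = (4 * π / ‖a‖) • (∫ r in 0..‖a‖, r ^ 2 • f r) + (4 * π) • ∫ r in Ioi ‖a‖, r • f r :=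
      integral_inv_norm_sub_smul_comp_norm_eq_add hE a hf.aestronglyMeasurable hin hout
    _ = _ := by
      rw [intervalIntegral.integral_congr_Ioo_of_le hpos.le (sq_smul_f.mono Ioo_subset_Ioi_self)]
      simp only [smul_f, smul_eq_mul]

end RadialIntegrals

theorem coulomb_laplace_expansion (a : EuclideanSpace ℝ (Fin 3)) (ha : a ≠ 0) :
    ∫ x : EuclideanSpace ℝ (Fin 3),
        Real.exp (-‖x‖ ^ 2) / (‖x‖ ^ 2 * ‖a - x‖)
      = (4 * π / ‖a‖) * (∫ s in (0 : ℝ)..‖a‖, Real.exp (-s ^ 2)) +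
          4 * π * ∫ s in Set.Ioi ‖a‖, Real.exp (-s ^ 2) / s :=
  coulomb_laplace_expansion_general finrank_euclideanSpace_fin a ha
end

section
/- lim_{a → 0, a ≠ 0} ( ∫_{ℝ³} e^{-|x|²} / (|x|² · |a - x|) dx + 4π ln|a| ) = 4π - 2π γ, where γ is the Euler–Mascheroni constant. -/
open Real MeasureTheory Filter Topology

/-!
Write `t = ‖x‖²`. Projecting Lebesgue measure of a plane along `‖·‖²` gives `π dt`, so slicing
`ℝ³` orthogonally to `a` reduces the Coulomb integral of a radial function to integrals of
`1 / ‖a - x‖` over chords, which yields Newton's shell theorem. For the density `e⁻ᵗ / t` it gives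
`2π (‖a‖⁻¹ ∫₀^{‖a‖²} e⁻ᵗ t^{-1/2} dt + E₁(‖a‖²))`. The first summand tends to `2`, and integrating
by parts, `E₁(x) = -log x - γ + o(1)` because `∫₀^∞ e⁻ᵗ log t dt = Γ'(1) = -γ`.
-/

section

open Set Module
open scoped ENNReal InnerProductSpace

/-- The exponential integral `E₁`, with values of interest for `0 < x`: for `x ≤ 0` the
integrand is not integrable and the integral is `0` by convention. -/
noncomputable def expIntegralE₁ (x : ℝ) : ℝ :=
  ∫ t in Ioi x, exp (-t) / t

lemma integral_log_mul_exp_neg_Ioi :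
    ∫ t in Ioi (0 : ℝ), log t * exp (-t) = -eulerMascheroniConstant := by
  have hΓ : Complex.GammaIntegral =ᶠ[𝓝 1] Complex.Gamma := by
    filter_upwards [(isOpen_Ioi.preimage Complex.continuous_re).mem_nhds
      (show (1 : ℂ) ∈ Complex.re ⁻¹' Ioi 0 by simp)] with s hs
    exact (Complex.Gamma_eq_integral hs).symm
  have hderiv := (Complex.hasDerivAt_GammaIntegral (s := 1) (by simp)).unique
    (Complex.hasDerivAt_Gamma_one.congr_of_eventuallyEq hΓ)
  simp only [sub_self, Complex.cpow_zero, one_mul, ← Complex.ofReal_mul] at hderiv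
  rw [integral_complex_ofReal] at hderiv
  exact_mod_cast hderiv

-- A non-integrable function would have Bochner integral `0`, whereas `γ ≠ 0`.
lemma integrableOn_log_mul_exp_neg_Ioi :
    IntegrableOn (fun t : ℝ => log t * exp (-t)) (Ioi 0) := by
  refine Integrable.of_integral_ne_zero ?_
  rw [integral_log_mul_exp_neg_Ioi]
  linarith [one_half_lt_eulerMascheroniConstant]

lemma integrableOn_exp_neg_div_Ioi {x : ℝ} (hx : 0 < x) :
    IntegrableOn (fun t : ℝ => exp (-t) / t) (Ioi x) := by
  refine Integrable.mono' ((integrableOn_exp_neg_Ioi x).div_const x)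
    (Measurable.aestronglyMeasurable (by fun_prop)) ?_
  filter_upwards [ae_restrict_mem measurableSet_Ioi] with t (ht : x < t)
  have ht₀ : 0 < t := hx.trans ht
  rw [norm_of_nonneg (by positivity)]
  gcongr

lemma tendsto_exp_neg_mul_log_atTop :
    Tendsto (fun t : ℝ => exp (-t) * log t) atTop (𝓝 0) := by
  have h : Tendsto (fun t : ℝ => t * exp (-t)) atTop (𝓝 0) := by
    simpa only [pow_one] using tendsto_pow_mul_exp_neg_atTop_nhds_zero 1
  refine (isLittleO_log_id_atTop.isBigO.mul
    (Asymptotics.isBigO_refl (fun t : ℝ => exp (-t)) atTop)).trans_tendsto h |>.congr fun t => ?_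
  rw [mul_comm]

lemma expIntegralE₁_eq_neg_exp_neg_mul_log_add_integral {x : ℝ} (hx : 0 < x) :
    expIntegralE₁ x = -(exp (-x) * log x) + ∫ t in Ioi x, log t * exp (-t) := by
  have hdiv := integrableOn_exp_neg_div_Ioi hx
  have hlog := integrableOn_log_mul_exp_neg_Ioi.mono_set (Ioi_subset_Ioi hx.le)
  have hderiv : ∀ t ∈ Ici x, HasDerivAt (fun t => exp (-t) * log t)
      (exp (-t) / t - log t * exp (-t)) t := fun t ht =>
    ((hasDerivAt_neg t).exp.mul (hasDerivAt_log (hx.trans_le ht).ne')).congr_deriv (by ring)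
  have hparts := integral_Ioi_of_hasDerivAt_of_tendsto' hderiv (hdiv.sub hlog)
    tendsto_exp_neg_mul_log_atTop
  rw [integral_sub hdiv hlog] at hparts
  rw [expIntegralE₁]
  linarith

lemma tendsto_one_sub_exp_neg_mul_log :
    Tendsto (fun x : ℝ => (1 - exp (-x)) * log x) (𝓝[>] 0) (𝓝 0) := by
  have hlog : Tendsto (fun x : ℝ => |log x * x|) (𝓝[>] 0) (𝓝 0) := by
    simpa using (tendsto_log_mul_rpow_nhdsGT_zero one_pos).abs
  refine squeeze_zero_norm' ?_ hlog
  filter_upwards [self_mem_nhdsWithin] with x (hx : 0 < x)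
  rw [norm_eq_abs, mul_comm, abs_mul, abs_mul]
  gcongr
  · simpa using hx.le
  · linarith [one_sub_le_exp_neg x]

lemma tendsto_expIntegralE₁_add_log :
    Tendsto (fun x => expIntegralE₁ x + log x) (𝓝[>] 0) (𝓝 (-eulerMascheroniConstant)) := by
  have htail : Tendsto (fun x => ∫ t in Ioi x, log t * exp (-t)) (𝓝[>] 0)
      (𝓝 (-eulerMascheroniConstant)) := by
    have hcover := aecover_Ioi_of_Ioi (μ := volume)
      (tendsto_id'.2 (nhdsWithin_le_nhds (a := (0 : ℝ)) (s := Ioi 0)))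
    rw [← integral_log_mul_exp_neg_Ioi]
    refine (hcover.integral_tendsto_of_countably_generated
      integrableOn_log_mul_exp_neg_Ioi).congr' ?_
    filter_upwards [self_mem_nhdsWithin] with x (hx : 0 < x)
    rw [Measure.restrict_restrict measurableSet_Ioi, id,
      inter_eq_left.2 (Ioi_subset_Ioi hx.le)]
  rw [← add_zero (-_)]
  refine (htail.add tendsto_one_sub_exp_neg_mul_log).congr' ?_
  filter_upwards [self_mem_nhdsWithin] with x hx
  rw [expIntegralE₁_eq_neg_exp_neg_mul_log_add_integral hx]
  ring

lemma tendsto_integral_exp_neg_mul_rpow_div_rpow {c : ℝ} (hc : 0 < c) :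
    Tendsto (fun x : ℝ => (∫ t in Ioc 0 x, exp (-t) * t ^ (c - 1)) / x ^ c)
      (𝓝[>] 0) (𝓝 (1 / c)) := by
  have hlower : Tendsto (fun x : ℝ => exp (-x) * (1 / c)) (𝓝[>] 0) (𝓝 (1 / c)) := by
    have : Continuous fun x : ℝ => exp (-x) * (1 / c) := by fun_prop
    simpa using (this.tendsto 0).mono_left nhdsWithin_le_nhds
  have hpow {x : ℝ} (hx : 0 ≤ x) : ∫ t in Ioc 0 x, t ^ (c - 1) = x ^ c / c := by
    rw [← intervalIntegral.integral_of_le hx, integral_rpow (.inl (by linarith)), sub_add_cancel,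
      zero_rpow hc.ne', sub_zero]
  have hpow_int {x : ℝ} (hx : 0 ≤ x) : IntegrableOn (fun t : ℝ => t ^ (c - 1)) (Ioc 0 x) :=
    (intervalIntegrable_iff_integrableOn_Ioc_of_le hx).1
      (intervalIntegral.intervalIntegrable_rpow' (by linarith))
  have hgamma_int (x : ℝ) : IntegrableOn (fun t : ℝ => exp (-t) * t ^ (c - 1)) (Ioc 0 x) :=
    (GammaIntegral_convergent hc).mono_set Ioc_subset_Ioi_self
  refine tendsto_of_tendsto_of_tendsto_of_le_of_le' hlower tendsto_const_nhds ?_ ?_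
  · filter_upwards [self_mem_nhdsWithin] with x (hx : 0 < x)
    rw [le_div_iff₀ (by positivity), mul_assoc, one_div_mul_eq_div, ← hpow hx.le,
      ← integral_const_mul]
    refine setIntegral_mono_on ((hpow_int hx.le).const_mul _) (hgamma_int x) measurableSet_Ioc
      fun t ht => ?_
    have := ht.1
    gcongr
    exact ht.2
  · filter_upwards [self_mem_nhdsWithin] with x (hx : 0 < x)
    rw [div_le_iff₀ (by positivity), one_div_mul_eq_div, ← hpow hx.le]
    refine setIntegral_mono_on (hgamma_int x) (hpow_int hx.le) measurableSet_Ioc fun t ht => ?_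
    have := ht.1
    exact mul_le_of_le_one_left (by positivity) (exp_le_one_iff.2 (by linarith))

variable {E : Type*} [NormedAddCommGroup E] [InnerProductSpace ℝ E] [FiniteDimensional ℝ E]
  [MeasurableSpace E] [BorelSpace E]

lemma map_norm_sq_volume (hE : finrank ℝ E = 2) :
    (volume : Measure E).map (fun x => ‖x‖ ^ 2) = ENNReal.ofReal π • volume.restrict (Ioi 0) := by
  have hmeas : Measurable fun x : E => ‖x‖ ^ 2 := by fun_prop
  have : Nontrivial E := nontrivial_of_finrank_pos (R := ℝ) (by lia)
  set μ := (volume : Measure E).map (fun x => ‖x‖ ^ 2)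
  set ν : Measure ℝ := ENNReal.ofReal π • volume.restrict (Ioi 0)
  have hμ (b : ℝ) : μ (Iio b) = ENNReal.ofReal (π * b) := by
    have hball : (fun x : E => ‖x‖ ^ 2) ⁻¹' Iio b = Metric.ball 0 √b := by
      ext x
      simp [lt_sqrt (norm_nonneg x)]
    rw [Measure.map_apply hmeas measurableSet_Iio, hball,
      InnerProductSpace.volume_ball_of_dim_even (k := 1) (by lia), hE]
    rcases le_total 0 b with hb | hb
    · rw [← ENNReal.ofReal_pow (sqrt_nonneg b), sq_sqrt hb, mul_comm π,
        ENNReal.ofReal_mul hb]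
      simp
    · have hπb : π * b ≤ 0 := mul_nonpos_of_nonneg_of_nonpos pi_nonneg hb
      simp [sqrt_eq_zero_of_nonpos hb, ENNReal.ofReal_of_nonpos hπb]
  have hν (b : ℝ) : ν (Iio b) = ENNReal.ofReal (π * b) := by
    simp [ν, Measure.restrict_apply, Iio_inter_Ioi, ENNReal.ofReal_mul pi_nonneg]
  have hdiff {ρ : Measure ℝ} (hρ : ∀ b, ρ (Iio b) = ENNReal.ofReal (π * b)) {a b : ℝ}
      (hab : a < b) : ρ (Ico a b) = ENNReal.ofReal (π * b) - ENNReal.ofReal (π * a) := by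
    rw [← Iio_sdiff_Iio, measure_sdiff (Iio_subset_Iio hab.le) measurableSet_Iio.nullMeasurableSet
      (by simp [hρ]), hρ, hρ]
  refine Measure.ext_of_Ico' μ ν (fun a b hab => ?_) fun a b hab => ?_
  · simp [hdiff hμ hab]
  · rw [hdiff hμ hab, hdiff hν hab]

lemma lintegral_comp_norm_sq (hE : finrank ℝ E = 2) {g : ℝ → ℝ≥0∞} (hg : Measurable g) :
    ∫⁻ x : E, g (‖x‖ ^ 2) = ENNReal.ofReal π * ∫⁻ t in Ioi 0, g t := by
  rw [← lintegral_map hg (by fun_prop), map_norm_sq_volume hE, lintegral_smul_measure, smul_eq_mul]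

lemma lintegral_comp_const_add_norm_sq (hE : finrank ℝ E = 2) (c : ℝ) {g : ℝ → ℝ≥0∞}
    (hg : Measurable g) :
    ∫⁻ x : E, g (c + ‖x‖ ^ 2) = ENNReal.ofReal π * ∫⁻ t in Ioi c, g t := by
  have hshift : (fun t => c + t) ⁻¹' Ioi c = Ioi 0 := by simp
  rw [lintegral_comp_norm_sq hE (g := fun t => g (c + t)) (by fun_prop), ← hshift,
    (measurePreserving_add_left volume c).setLIntegral_comp_preimage measurableSet_Ioi hg]

lemma measurePreserving_smul_add_orthogonal {e : E} (he : ‖e‖ = 1) :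
    MeasurePreserving (fun p : ℝ × (ℝ ∙ e)ᗮ => p.1 • e + (p.2 : E)) :=
  (ℝ ∙ e).orthogonalDecomposition.symm.measurePreserving.comp <|
    (WithLp.volume_preserving_toLp _ _).comp <|
      (LinearIsometryEquiv.toSpanUnitSingleton e he).measurePreserving.prod (.id volume)

lemma lintegral_lintegral_Ioi_sq {g : ℝ → ℝ → ℝ≥0∞} (hg : Measurable g.uncurry) :
    ∫⁻ z, ∫⁻ t in Ioi (z ^ 2), g t z = ∫⁻ t in Ioi 0, ∫⁻ z in Ioo (-√t) √t, g t z := by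
  have hS : MeasurableSet {p : ℝ × ℝ | p.1 ^ 2 < p.2} :=
    measurableSet_lt (by fun_prop) (by fun_prop)
  have hgS : Measurable fun p : ℝ × ℝ => (Ioi (p.1 ^ 2)).indicator (g · p.1) p.2 :=
    (hg.comp measurable_swap).indicator hS
  calc ∫⁻ z, ∫⁻ t in Ioi (z ^ 2), g t z
      = ∫⁻ z, ∫⁻ t in Ioi 0, (Ioi (z ^ 2)).indicator (g · z) t := by
        refine lintegral_congr fun z => ?_
        rw [setLIntegral_indicator measurableSet_Ioi,
          inter_eq_left.2 (Ioi_subset_Ioi (sq_nonneg z))]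
    _ = ∫⁻ t in Ioi 0, ∫⁻ z, (Ioi (z ^ 2)).indicator (g · z) t :=
        lintegral_lintegral_swap hgS.aemeasurable
    _ = ∫⁻ t in Ioi 0, ∫⁻ z in Ioo (-√t) √t, g t z := by
        refine lintegral_congr fun t => ?_
        rw [← lintegral_indicator measurableSet_Ioo]
        simp only [indicator_apply, mem_Ioi, mem_Ioo, sq_lt]

lemma lintegral_comp_norm_sq_inner (hE : finrank ℝ E = 3) {e : E} (he : ‖e‖ = 1)
    {g : ℝ → ℝ → ℝ≥0∞} (hg : Measurable g.uncurry) :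
    ∫⁻ x, g (‖x‖ ^ 2) ⟪e, x⟫_ℝ =
      ENNReal.ofReal π * ∫⁻ t in Ioi 0, ∫⁻ z in Ioo (-√t) √t, g t z := by
  have hplane : finrank ℝ (ℝ ∙ e)ᗮ = 2 :=
    haveI : Fact (finrank ℝ E = 2 + 1) := ⟨hE⟩
    Submodule.finrank_orthogonal_span_singleton (by rintro rfl; simp at he)
  have hcoords (z : ℝ) (y : (ℝ ∙ e)ᗮ) :
      ‖z • e + (y : E)‖ ^ 2 = z ^ 2 + ‖y‖ ^ 2 ∧ ⟪e, z • e + (y : E)⟫_ℝ = z := by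
    have hey : ⟪e, y⟫_ℝ = 0 := Submodule.mem_orthogonal_singleton_iff_inner_right.1 y.2
    constructor
    · rw [norm_add_sq_real, inner_smul_left, hey, norm_smul, he]
      simp
    · rw [inner_add_right, hey, inner_smul_right, real_inner_self_eq_norm_sq, he]
      simp
  have hsection (z : ℝ) : Measurable fun t => g t z :=
    hg.comp (by fun_prop : Measurable fun t => (t, z))
  calc ∫⁻ x, g (‖x‖ ^ 2) ⟪e, x⟫_ℝ
      = ∫⁻ p : ℝ × (ℝ ∙ e)ᗮ, g (p.1 ^ 2 + ‖p.2‖ ^ 2) p.1 := by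
        have hchange := (measurePreserving_smul_add_orthogonal he).lintegral_comp
          (hg.comp (by fun_prop : Measurable fun x : E => (‖x‖ ^ 2, ⟪e, x⟫_ℝ)))
        simpa only [Function.uncurry, Function.comp_def, hcoords] using hchange.symm
    _ = ∫⁻ z, ∫⁻ y : (ℝ ∙ e)ᗮ, g (z ^ 2 + ‖y‖ ^ 2) z :=
        lintegral_prod _ (hg.comp (by fun_prop : Measurable fun p : ℝ × (ℝ ∙ e)ᗮ =>
          (p.1 ^ 2 + ‖p.2‖ ^ 2, p.1))).aemeasurable
    _ = ENNReal.ofReal π * ∫⁻ z, ∫⁻ t in Ioi (z ^ 2), g t z := by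
        simp only [fun z => lintegral_comp_const_add_norm_sq hplane (z ^ 2) (hsection z)]
        rw [lintegral_const_mul' _ _ ENNReal.ofReal_ne_top]
    _ = ENNReal.ofReal π * ∫⁻ t in Ioi 0, ∫⁻ z in Ioo (-√t) √t, g t z := by
        rw [lintegral_lintegral_Ioi_sq hg]

lemma lintegral_inv_sqrt_chord {r s : ℝ} (hr : 0 < r) (hs : 0 < s) :
    ∫⁻ z in Ioo (-r) r, ENNReal.ofReal (√(r ^ 2 + s ^ 2 - 2 * s * z))⁻¹ =
      ENNReal.ofReal (2 * (r / max r s)) := by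
  have hpos : ∀ z ∈ Ioo (-r) r, 0 < r ^ 2 + s ^ 2 - 2 * s * z := fun z hz => by
    nlinarith [sq_nonneg (r - s), mul_pos hs (sub_pos.2 hz.2)]
  have hcont : ContinuousOn (fun z => -√(r ^ 2 + s ^ 2 - 2 * s * z) / s) (Icc (-r) r) := by
    fun_prop
  have hderiv : ∀ z ∈ Ioo (-r) r, HasDerivAt (fun z => -√(r ^ 2 + s ^ 2 - 2 * s * z) / s)
      (√(r ^ 2 + s ^ 2 - 2 * s * z))⁻¹ z := fun z hz => by
    have hlin := ((hasDerivAt_id z).const_mul (2 * s)).const_sub (r ^ 2 + s ^ 2)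
    refine ((hlin.sqrt (hpos z hz).ne').neg.div_const s).congr_deriv ?_
    simp only [id]
    field_simp
  have hderiv_int := intervalIntegral.integrableOn_deriv_of_nonneg hcont hderiv
    fun z _ => by positivity
  have hvalue : ∫ z in -r..r, (√(r ^ 2 + s ^ 2 - 2 * s * z))⁻¹ = 2 * (r / max r s) := by
    rw [intervalIntegral.integral_eq_sub_of_hasDerivAt_of_le (by linarith) hcont hderiv
      ((intervalIntegrable_iff_integrableOn_Ioc_of_le (by linarith)).2 hderiv_int),
      show r ^ 2 + s ^ 2 - 2 * s * r = (s - r) ^ 2 by ring,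
      show r ^ 2 + s ^ 2 - 2 * s * -r = (r + s) ^ 2 by ring, sqrt_sq_eq_abs,
      sqrt_sq (by positivity), ← max_sub_min_eq_abs, ← max_add_min r s]
    have : 0 < max r s := lt_max_of_lt_left hr
    field_simp
    linear_combination 2 * min_mul_max r s
  rw [← ofReal_integral_eq_lintegral_ofReal (hderiv_int.mono_set Ioo_subset_Ioc_self)
    (ae_of_all _ fun z => by positivity), ← integral_Ioc_eq_integral_Ioo,
    ← intervalIntegral.integral_of_le (by linarith), hvalue]

-- Newton's shell theorem: `‖a - x‖⁻¹` has mean `(max √t ‖a‖)⁻¹` over the sphere `‖x‖ ^ 2 = t`, and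
-- `2π √t dt` is the volume element of these shells.
lemma lintegral_comp_norm_sq_div_norm_sub (hE : finrank ℝ E = 3) {a : E} (ha : a ≠ 0)
    {f : ℝ → ℝ≥0∞} (hf : Measurable f) :
    ∫⁻ x, f (‖x‖ ^ 2) * ENNReal.ofReal ‖a - x‖⁻¹ =
      ENNReal.ofReal (2 * π) * ∫⁻ t in Ioi 0, f t * ENNReal.ofReal (√t / max √t ‖a‖) := by
  have hs : 0 < ‖a‖ := norm_pos_iff.2 ha
  set e : E := ‖a‖⁻¹ • a
  have he : ‖e‖ = 1 := norm_smul_inv_norm ha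
  have hdist (x : E) : ‖a - x‖ = √(‖x‖ ^ 2 + ‖a‖ ^ 2 - 2 * ‖a‖ * ⟪e, x⟫_ℝ) := by
    rw [← sqrt_sq (norm_nonneg (a - x)), norm_sub_sq_real, real_inner_smul_left]
    congr 1
    field_simp
    ring
  have hkernel : Measurable (fun t z =>
      f t * ENNReal.ofReal (√(t + ‖a‖ ^ 2 - 2 * ‖a‖ * z))⁻¹).uncurry := by
    unfold Function.uncurry
    fun_prop
  have hchord : ∀ t ∈ Ioi (0 : ℝ), ∫⁻ z in Ioo (-√t) √t,
      f t * ENNReal.ofReal (√(t + ‖a‖ ^ 2 - 2 * ‖a‖ * z))⁻¹ =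
        ENNReal.ofReal 2 * (f t * ENNReal.ofReal (√t / max √t ‖a‖)) := fun t (ht : 0 < t) => by
    have hnewton := lintegral_inv_sqrt_chord (sqrt_pos.2 ht) hs
    rw [sq_sqrt ht.le, ENNReal.ofReal_mul zero_le_two] at hnewton
    rw [lintegral_const_mul _ (by fun_prop), hnewton, mul_left_comm]
  simp only [hdist]
  rw [lintegral_comp_norm_sq_inner hE he hkernel, setLIntegral_congr_fun measurableSet_Ioi hchord,
    lintegral_const_mul' _ _ ENNReal.ofReal_ne_top, ← mul_assoc,
    ← ENNReal.ofReal_mul pi_nonneg, mul_comm π]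

lemma integral_comp_norm_sq_div_norm_sub (hE : finrank ℝ E = 3) {a : E} (ha : a ≠ 0)
    {f : ℝ → ℝ} (hf : Measurable f) (hf₀ : ∀ t, 0 ≤ t → 0 ≤ f t) :
    ∫ x, f (‖x‖ ^ 2) / ‖a - x‖ = 2 * π * ∫ t in Ioi 0, f t * (√t / max √t ‖a‖) := by
  have hleft (x : E) : 0 ≤ f (‖x‖ ^ 2) := hf₀ _ (sq_nonneg _)
  have hright : ∀ᵐ t ∂volume.restrict (Ioi 0), 0 ≤ f t := by
    filter_upwards [ae_restrict_mem measurableSet_Ioi] with t (ht : 0 < t) using hf₀ t ht.le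
  rw [integral_eq_lintegral_of_nonneg_ae (ae_of_all _ fun x => div_nonneg (hleft x) (norm_nonneg _))
      (Measurable.aestronglyMeasurable (by fun_prop)),
    integral_eq_lintegral_of_nonneg_ae (hright.mono fun t ht => mul_nonneg ht (by positivity))
      (Measurable.aestronglyMeasurable (by fun_prop)),
    ← ENNReal.toReal_ofReal two_pi_pos.le, ← ENNReal.toReal_mul]
  simp only [div_eq_mul_inv (f _), ENNReal.ofReal_mul (hleft _)]
  rw [lintegral_comp_norm_sq_div_norm_sub hE ha (f := fun t => ENNReal.ofReal (f t))
      (by fun_prop),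
    lintegral_congr_ae (hright.mono fun t ht => ENNReal.ofReal_mul ht)]

lemma integral_exp_neg_norm_sq_div (hE : finrank ℝ E = 3) {a : E} (ha : a ≠ 0) :
    ∫ x, exp (-‖x‖ ^ 2) / (‖x‖ ^ 2 * ‖a - x‖) =
      2 * π * ((∫ t in Ioc 0 (‖a‖ ^ 2), exp (-t) * t ^ ((1 / 2 : ℝ) - 1)) / ‖a‖ +
        expIntegralE₁ (‖a‖ ^ 2)) := by
  have hs : 0 < ‖a‖ := norm_pos_iff.2 ha
  have hs₂ : 0 < ‖a‖ ^ 2 := by positivity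
  have hnear : EqOn (fun t => exp (-t) / t * (√t / max √t ‖a‖))
      (fun t => exp (-t) * t ^ ((1 / 2 : ℝ) - 1) / ‖a‖) (Ioc 0 (‖a‖ ^ 2)) := fun t ht => by
    simp only
    rw [max_eq_right (sqrt_le_iff.2 ⟨hs.le, ht.2⟩), rpow_sub_one ht.1.ne', ← sqrt_eq_rpow]
    ring
  have hfar : EqOn (fun t => exp (-t) / t * (√t / max √t ‖a‖))
      (fun t => exp (-t) / t) (Ioi (‖a‖ ^ 2)) := fun t (ht : ‖a‖ ^ 2 < t) => by
    simp only
    rw [max_eq_left (le_sqrt_of_sq_le ht.le), div_self (sqrt_pos.2 (hs₂.trans ht)).ne', mul_one]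
  have hnear_int : IntegrableOn (fun t : ℝ => exp (-t) * t ^ ((1 / 2 : ℝ) - 1) / ‖a‖)
      (Ioc 0 (‖a‖ ^ 2)) :=
    ((GammaIntegral_convergent one_half_pos).mono_set Ioc_subset_Ioi_self).div_const _
  calc ∫ x, exp (-‖x‖ ^ 2) / (‖x‖ ^ 2 * ‖a - x‖)
      = ∫ x, exp (-‖x‖ ^ 2) / ‖x‖ ^ 2 / ‖a - x‖ := by simp only [div_div]
    _ = 2 * π * ∫ t in Ioi 0, exp (-t) / t * (√t / max √t ‖a‖) :=
        integral_comp_norm_sq_div_norm_sub hE ha (f := fun t => exp (-t) / t) (by fun_prop)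
          fun t ht => by positivity
    _ = _ := by
        rw [← Ioc_union_Ioi_eq_Ioi hs₂.le, setIntegral_union (Ioc_disjoint_Ioi le_rfl)
            measurableSet_Ioi (hnear_int.congr_fun hnear.symm measurableSet_Ioc)
            ((integrableOn_exp_neg_div_Ioi hs₂).congr_fun hfar.symm measurableSet_Ioi),
          setIntegral_congr_fun measurableSet_Ioc hnear,
          setIntegral_congr_fun measurableSet_Ioi hfar, integral_div, expIntegralE₁]

theorem coulomb_log_singularity_general (hE : finrank ℝ E = 3) :
    Tendsto
      (fun a : E => (∫ x : E, exp (-‖x‖ ^ 2) / (‖x‖ ^ 2 * ‖a - x‖)) + 4 * π * log ‖a‖)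
      (𝓝[≠] 0) (𝓝 (4 * π - 2 * π * eulerMascheroniConstant)) := by
  have hsq : Tendsto (fun a : E => ‖a‖ ^ 2) (𝓝[≠] 0) (𝓝[>] 0) := by
    refine tendsto_nhdsWithin_iff.2 ⟨?_, ?_⟩
    · have : Continuous fun a : E => ‖a‖ ^ 2 := by fun_prop
      simpa using (this.tendsto 0).mono_left nhdsWithin_le_nhds
    · filter_upwards [self_mem_nhdsWithin] with a (ha : a ≠ 0)
      exact pow_pos (norm_pos_iff.2 ha) 2
  have hlim := (((tendsto_integral_exp_neg_mul_rpow_div_rpow one_half_pos).add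
    tendsto_expIntegralE₁_add_log).comp hsq).const_mul (2 * π)
  convert hlim.congr' ?_ using 2
  · ring
  · filter_upwards [self_mem_nhdsWithin] with a (ha : a ≠ 0)
    rw [integral_exp_neg_norm_sq_div hE ha, Function.comp_apply, ← sqrt_eq_rpow,
      sqrt_sq (norm_nonneg a), log_pow]
    push_cast
    ring

end

theorem coulomb_log_singularity :
    Tendsto
      (fun a : EuclideanSpace ℝ (Fin 3) =>
        (∫ x : EuclideanSpace ℝ (Fin 3),
            Real.exp (-‖x‖ ^ 2) / (‖x‖ ^ 2 * ‖a - x‖)) + 4 * π * Real.log ‖a‖)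
      (𝓝[≠] 0)
      (𝓝 (4 * π - 2 * π * Real.eulerMascheroniConstant)) :=
  coulomb_log_singularity_general finrank_euclideanSpace_fin
end

section
/- For every a > 0 and every γ ∈ ℝ, ∫_0^∞ e^{-a t²} sinh(γ t) / t dt = √π · e^{γ²/(4a)} · F(γ/(2√a)), where F is the Dawson function. -/
open Real MeasureTheory

/-- The Dawson function `F(s) = e^{-s²} ∫_0^s e^{u²} du`. -/
noncomputable def dawson (s : ℝ) : ℝ :=
  Real.exp (-s ^ 2) * ∫ u in (0 : ℝ)..s, Real.exp (u ^ 2)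

/-!
Write `sinh (γ t) / t = ∫_0^γ cosh (x t) dx` and integrate in `t` first. Completing the square and
evenness of `cosh` give `∫_0^∞ e^{-a t²} cosh (x t) dt = √(π / a) / 2 * e^{x² / (4a)}`; since the
integrand is positive, the same formula justifies the exchange of integrals. What remains, the
integral of `e^{x² / (4a)}` from `0` to `γ`, becomes a Dawson integral under `x = 2 √a u`.
-/

open Set

lemma integral_eq_two_mul_integral_Ioi_of_even {f : ℝ → ℝ} (hf : f.Even) :
    ∫ t, f t = 2 * ∫ t in Ioi 0, f t := by
  have f_abs (t : ℝ) : f |t| = f t := by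
    rcases abs_choice t with h | h <;> rw [h]
    exact hf t
  simpa only [f_abs] using integral_comp_abs (f := f)

lemma integral_cosh_mul {t : ℝ} (ht : t ≠ 0) (b c : ℝ) :
    ∫ x in b..c, cosh (x * t) = (sinh (c * t) - sinh (b * t)) / t := by
  rw [intervalIntegral.integral_comp_mul_right cosh ht,
    intervalIntegral.integral_eq_sub_of_hasDerivAt (fun y _ ↦ hasDerivAt_sinh y)
      (continuous_cosh.intervalIntegrable _ _),
    smul_eq_mul, inv_mul_eq_div]

lemma integral_exp_sq_eq_exp_sq_mul_dawson (s : ℝ) :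
    ∫ u in 0..s, exp (u ^ 2) = exp (s ^ 2) * dawson s := by
  rw [dawson, ← mul_assoc, ← exp_add, add_neg_cancel, exp_zero, one_mul]

section GaussianWeight

variable {a : ℝ}

lemma exp_neg_mul_sq_mul_exp_mul (ha : a ≠ 0) (x t : ℝ) :
    exp (-a * t ^ 2) * exp (x * t)
      = exp (x ^ 2 / (4 * a)) * exp (-a * (t - x / (2 * a)) ^ 2) := by
  rw [← exp_add, ← exp_add]
  congr 1
  field

lemma integrable_exp_neg_mul_sq_mul_exp_mul (ha : 0 < a) (x : ℝ) :
    Integrable fun t ↦ exp (-a * t ^ 2) * exp (x * t) := by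
  simp_rw [exp_neg_mul_sq_mul_exp_mul ha.ne']
  exact ((integrable_exp_neg_mul_sq ha).comp_sub_right (x / (2 * a))).const_mul _

lemma integral_exp_neg_mul_sq_mul_exp_mul (ha : a ≠ 0) (x : ℝ) :
    ∫ t, exp (-a * t ^ 2) * exp (x * t) = √(π / a) * exp (x ^ 2 / (4 * a)) := by
  simp_rw [exp_neg_mul_sq_mul_exp_mul ha]
  rw [integral_const_mul, integral_sub_right_eq_self (fun t ↦ exp (-a * t ^ 2)),
    integral_gaussian, mul_comm]

lemma exp_neg_mul_sq_mul_cosh_mul (x t : ℝ) :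
    exp (-a * t ^ 2) * cosh (x * t)
      = (exp (-a * t ^ 2) * exp (x * t) + exp (-a * t ^ 2) * exp (-x * t)) / 2 := by
  rw [cosh_eq, neg_mul x t]
  ring

lemma integrable_exp_neg_mul_sq_mul_cosh_mul (ha : 0 < a) (x : ℝ) :
    Integrable fun t ↦ exp (-a * t ^ 2) * cosh (x * t) := by
  simp_rw [exp_neg_mul_sq_mul_cosh_mul]
  exact ((integrable_exp_neg_mul_sq_mul_exp_mul ha x).add
    (integrable_exp_neg_mul_sq_mul_exp_mul ha (-x))).div_const 2

lemma integral_exp_neg_mul_sq_mul_cosh_mul (ha : 0 < a) (x : ℝ) :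
    ∫ t, exp (-a * t ^ 2) * cosh (x * t) = √(π / a) * exp (x ^ 2 / (4 * a)) := by
  simp_rw [exp_neg_mul_sq_mul_cosh_mul]
  rw [integral_div, integral_add (integrable_exp_neg_mul_sq_mul_exp_mul ha x)
      (integrable_exp_neg_mul_sq_mul_exp_mul ha (-x)),
    integral_exp_neg_mul_sq_mul_exp_mul ha.ne', integral_exp_neg_mul_sq_mul_exp_mul ha.ne', neg_sq,
    add_self_div_two]

lemma integral_Ioi_exp_neg_mul_sq_mul_cosh_mul (ha : 0 < a) (x : ℝ) :
    ∫ t in Ioi 0, exp (-a * t ^ 2) * cosh (x * t) = √(π / a) / 2 * exp (x ^ 2 / (4 * a)) := by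
  have even : (fun t ↦ exp (-a * t ^ 2) * cosh (x * t)).Even := fun t ↦ by
    simp only [neg_sq, mul_neg, cosh_neg]
  have full_line := integral_exp_neg_mul_sq_mul_cosh_mul ha x
  rw [integral_eq_two_mul_integral_Ioi_of_even even] at full_line
  linarith

lemma integrable_prod_exp_neg_mul_sq_mul_cosh_mul (ha : 0 < a) (b c : ℝ) :
    Integrable (Function.uncurry fun x t ↦ exp (-a * t ^ 2) * cosh (x * t))
      ((volume.restrict (uIoc b c)).prod (volume.restrict (Ioi 0))) := by
  have norm_eq (x t : ℝ) :
      ‖exp (-a * t ^ 2) * cosh (x * t)‖ = exp (-a * t ^ 2) * cosh (x * t) :=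
    norm_of_nonneg (mul_nonneg (exp_nonneg _) (cosh_pos _).le)
  have integrable_outer :
      IntervalIntegrable (fun x ↦ √(π / a) / 2 * exp (x ^ 2 / (4 * a))) volume b c :=
    Continuous.intervalIntegrable (by fun_prop) b c
  refine (integrable_prod_iff (Continuous.aestronglyMeasurable (by fun_prop))).2
    ⟨.of_forall fun x ↦ (integrable_exp_neg_mul_sq_mul_cosh_mul ha x).integrableOn, ?_⟩
  simpa only [Function.uncurry_apply_pair, norm_eq, integral_Ioi_exp_neg_mul_sq_mul_cosh_mul ha,
    IntegrableOn] using integrable_outer.def'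

lemma integral_Ioi_exp_neg_mul_sq_mul_sinh_sub_sinh_div (ha : 0 < a) (b c : ℝ) :
    ∫ t in Ioi 0, exp (-a * t ^ 2) * ((sinh (c * t) - sinh (b * t)) / t)
      = √(π / a) / 2 * ∫ x in b..c, exp (x ^ 2 / (4 * a)) := calc
  _ = ∫ t in Ioi 0, ∫ x in b..c, exp (-a * t ^ 2) * cosh (x * t) :=
    setIntegral_congr_fun measurableSet_Ioi fun t ht ↦ by
      rw [intervalIntegral.integral_const_mul, integral_cosh_mul (ne_of_gt ht)]
  _ = ∫ x in b..c, ∫ t in Ioi 0, exp (-a * t ^ 2) * cosh (x * t) :=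
    (intervalIntegral_integral_swap (integrable_prod_exp_neg_mul_sq_mul_cosh_mul ha b c)).symm
  _ = √(π / a) / 2 * ∫ x in b..c, exp (x ^ 2 / (4 * a)) := by
    simp_rw [integral_Ioi_exp_neg_mul_sq_mul_cosh_mul ha]
    rw [intervalIntegral.integral_const_mul]

lemma integral_exp_sq_div_four_mul (ha : 0 < a) (γ : ℝ) :
    ∫ x in 0..γ, exp (x ^ 2 / (4 * a))
      = 2 * √a * (exp (γ ^ 2 / (4 * a)) * dawson (γ / (2 * √a))) := by
  have sq_rescaled (x : ℝ) : x ^ 2 / (4 * a) = (x / (2 * √a)) ^ 2 := by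
    rw [div_pow, mul_pow, sq_sqrt ha.le]
    norm_num
  simp_rw [sq_rescaled]
  rw [intervalIntegral.integral_comp_div (fun u ↦ exp (u ^ 2)) (by positivity), zero_div,
    integral_exp_sq_eq_exp_sq_mul_dawson, smul_eq_mul]

end GaussianWeight

theorem gaussian_sinh_integral (a : ℝ) (ha : 0 < a) (γ : ℝ) :
    ∫ t in Set.Ioi (0 : ℝ), Real.exp (-a * t ^ 2) * Real.sinh (γ * t) / t
      = Real.sqrt π * Real.exp (γ ^ 2 / (4 * a)) * dawson (γ / (2 * Real.sqrt a)) := calc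
  _ = √(π / a) / 2 * ∫ x in 0..γ, exp (x ^ 2 / (4 * a)) := by
    simpa only [zero_mul, sinh_zero, sub_zero, mul_div_assoc] using
      integral_Ioi_exp_neg_mul_sq_mul_sinh_sub_sinh_div ha 0 γ
  _ = √(π / a) / 2 * (2 * √a * (exp (γ ^ 2 / (4 * a)) * dawson (γ / (2 * √a)))) := by
    rw [integral_exp_sq_div_four_mul ha]
  _ = √π * exp (γ ^ 2 / (4 * a)) * dawson (γ / (2 * √a)) := by
    rw [sqrt_div pi_nonneg]
    field
end

section
/- Let a > 0 and b, d ∈ ℝ, and set v := (b - d)/√(2a) and w := (b + d)/√(2a). Then ∫_0^∞ e^{-a t²} · (cosh((b + d)t) - cosh((b - d)t)) · t^{-2} dt = √(aπ)·(e^{v²/2} - e^{w²/2}) + √(2πa)·( w e^{w²/2} F(w/√2) - v e^{v²/2} F(v/√2) ), where F is the Dawson function. -/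
/-!
Taylor's formula with integral remainder gives `(cosh (ct) - 1) / t² = ∫_0^c (c - s) cosh (st) ds`.
Integrating against the Gaussian weight and exchanging the integrals removes the singularity at
`t = 0`: the inner integral becomes `½ √(π/a) e^{s²/(4a)}`, and after rescaling only
`∫_0^x (x - u) e^{u²} du` is left, whose first term is a Dawson function and whose second term is
elementary. The required integral is the difference of two such expressions, at `c = b + d` and at
`c = b - d`.
-/

open Real MeasureTheory

section TaylorRemainder

lemma integral_sub_mul_cosh {t : ℝ} (ht : t ≠ 0) (c : ℝ) :
    ∫ s in (0 : ℝ)..c, (c - s) * cosh (s * t) = (cosh (c * t) - 1) / t ^ 2 := by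
  have antideriv (s : ℝ) :
      HasDerivAt (fun s ↦ (c - s) * (sinh (s * t) / t) + cosh (s * t) / t ^ 2)
        ((c - s) * cosh (s * t)) s := by
    have h_arg : HasDerivAt (fun s ↦ s * t) t s := hasDerivAt_mul_const t
    have h_sub : HasDerivAt (fun s ↦ c - s) (-1) s := (hasDerivAt_id s).const_sub c
    refine ((h_sub.mul (h_arg.sinh.div_const t)).add (h_arg.cosh.div_const (t ^ 2))).congr_deriv ?_
    field_simp
    ring
  rw [intervalIntegral.integral_eq_sub_of_hasDerivAt (fun s _ ↦ antideriv s)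
    (Continuous.intervalIntegrable (by fun_prop) _ _)]
  simp only [sub_self, zero_mul, sinh_zero, cosh_zero, zero_div, mul_zero, zero_add]
  ring

variable {μ : Measure ℝ} {f : ℝ → ℝ} {c : ℝ}

lemma integrable_prod_sub_mul_cosh [SFinite μ] (hf : Integrable (fun t ↦ f t * cosh (c * t)) μ) :
    Integrable (fun z : ℝ × ℝ ↦ f z.2 * ((c - z.1) * cosh (z.1 * z.2)))
      ((volume.restrict (Set.uIoc 0 c)).prod μ) := by
  have kernel_bound : ∀ᵐ z ∂(volume.restrict (Set.uIoc 0 c)).prod μ,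
      ‖(c - z.1) * cosh (z.1 * z.2) / cosh (c * z.2)‖ ≤ |c| := by
    have h_mem : ∀ᵐ s ∂volume.restrict (Set.uIoc 0 c), s ∈ Set.uIoc 0 c :=
      ae_restrict_mem measurableSet_uIoc
    filter_upwards [Measure.quasiMeasurePreserving_fst.ae h_mem] with z hz
    have h_sub : |c - z.1| ≤ |c| := by
      simpa using Set.abs_sub_right_of_mem_uIcc (Set.uIoc_subset_uIcc hz)
    have h_abs : |z.1| ≤ |c| := by
      simpa using Set.abs_sub_left_of_mem_uIcc (Set.uIoc_subset_uIcc hz)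
    have h_cosh : cosh (z.1 * z.2) ≤ cosh (c * z.2) := by
      rw [cosh_le_cosh, abs_mul, abs_mul]
      gcongr
    rw [norm_div, norm_mul, norm_eq_abs, norm_of_nonneg (cosh_pos _).le,
      norm_of_nonneg (cosh_pos _).le, div_le_iff₀ (cosh_pos _)]
    gcongr
  have kernel_meas : Measurable fun z : ℝ × ℝ ↦ (c - z.1) * cosh (z.1 * z.2) / cosh (c * z.2) := by
    fun_prop
  have : IsFiniteMeasure (volume.restrict (Set.uIoc 0 c)) := by
    rw [Set.uIoc]
    infer_instance
  refine ((hf.comp_snd _).mul_bdd kernel_meas.aestronglyMeasurable kernel_bound).congr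
    (.of_forall fun z ↦ ?_)
  have h_cosh : cosh (c * z.2) ≠ 0 := (cosh_pos _).ne'
  field_simp

lemma ae_integral_mul_sub_mul_cosh (h0 : μ {0} = 0) :
    (fun t ↦ ∫ s in (0 : ℝ)..c, f t * ((c - s) * cosh (s * t)))
      =ᵐ[μ] fun t ↦ f t * ((cosh (c * t) - 1) / t ^ 2) := by
  filter_upwards [compl_mem_ae_iff.2 h0] with t ht
  rw [intervalIntegral.integral_const_mul, integral_sub_mul_cosh ht]

lemma integrable_mul_cosh_sub_one_div_sq [SFinite μ] (h0 : μ {0} = 0)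
    (hf : Integrable (fun t ↦ f t * cosh (c * t)) μ) :
    Integrable (fun t ↦ f t * ((cosh (c * t) - 1) / t ^ 2)) μ := by
  refine Integrable.congr ?_ (ae_integral_mul_sub_mul_cosh h0)
  simp only [intervalIntegral.intervalIntegral_eq_integral_uIoc]
  exact (integrable_prod_sub_mul_cosh hf).integral_prod_right.smul (𝕜 := ℝ) _

theorem integral_mul_cosh_sub_one_div_sq [SFinite μ] (h0 : μ {0} = 0)
    (hf : Integrable (fun t ↦ f t * cosh (c * t)) μ) :
    ∫ t, f t * ((cosh (c * t) - 1) / t ^ 2) ∂μ =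
      ∫ s in (0 : ℝ)..c, (c - s) * ∫ t, f t * cosh (s * t) ∂μ := by
  rw [← integral_congr_ae (ae_integral_mul_sub_mul_cosh h0),
    ← intervalIntegral_integral_swap (integrable_prod_sub_mul_cosh hf)]
  simp only [mul_left_comm (f _), integral_const_mul]

end TaylorRemainder

section GaussianMoments

variable {a : ℝ}

lemma exp_neg_mul_sq_mul_exp (ha : a ≠ 0) (c t : ℝ) :
    exp (-a * t ^ 2) * exp (c * t) =
      exp (-a * (t - c / (2 * a)) ^ 2) * exp (c ^ 2 / (4 * a)) := by
  rw [← exp_add, ← exp_add]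
  congr 1
  field_simp
  ring

lemma integrable_exp_neg_mul_sq_mul_exp (ha : 0 < a) (c : ℝ) :
    Integrable fun t : ℝ ↦ exp (-a * t ^ 2) * exp (c * t) := by
  simp only [exp_neg_mul_sq_mul_exp ha.ne']
  exact ((integrable_exp_neg_mul_sq ha).comp_sub_right _).mul_const _

lemma integral_exp_neg_mul_sq_mul_exp (ha : 0 < a) (c : ℝ) :
    ∫ t : ℝ, exp (-a * t ^ 2) * exp (c * t) = √(π / a) * exp (c ^ 2 / (4 * a)) := by
  simp only [exp_neg_mul_sq_mul_exp ha.ne']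
  rw [integral_mul_const, integral_sub_right_eq_self (fun t : ℝ ↦ exp (-a * t ^ 2)),
    integral_gaussian]

lemma exp_neg_mul_sq_mul_cosh (a c t : ℝ) :
    exp (-a * t ^ 2) * cosh (c * t) =
      (exp (-a * t ^ 2) * exp (c * t) + exp (-a * t ^ 2) * exp (-c * t)) / 2 := by
  rw [cosh_eq, neg_mul c t]
  ring

lemma integrable_exp_neg_mul_sq_mul_cosh (ha : 0 < a) (c : ℝ) :
    Integrable fun t : ℝ ↦ exp (-a * t ^ 2) * cosh (c * t) := by
  simp only [exp_neg_mul_sq_mul_cosh]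
  exact ((integrable_exp_neg_mul_sq_mul_exp ha c).add
    (integrable_exp_neg_mul_sq_mul_exp ha (-c))).div_const 2

lemma integral_exp_neg_mul_sq_mul_cosh (ha : 0 < a) (c : ℝ) :
    ∫ t : ℝ, exp (-a * t ^ 2) * cosh (c * t) = √(π / a) * exp (c ^ 2 / (4 * a)) := by
  simp only [exp_neg_mul_sq_mul_cosh]
  rw [integral_div, integral_add (integrable_exp_neg_mul_sq_mul_exp ha c)
    (integrable_exp_neg_mul_sq_mul_exp ha (-c)), integral_exp_neg_mul_sq_mul_exp ha,
    integral_exp_neg_mul_sq_mul_exp ha, neg_sq, add_self_div_two]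

lemma integral_Ioi_exp_neg_mul_sq_mul_cosh (ha : 0 < a) (c : ℝ) :
    ∫ t in Set.Ioi (0 : ℝ), exp (-a * t ^ 2) * cosh (c * t) =
      √(π / a) / 2 * exp (c ^ 2 / (4 * a)) := by
  have h_even (t : ℝ) :
      exp (-a * |t| ^ 2) * cosh (c * |t|) = exp (-a * t ^ 2) * cosh (c * t) := by
    rw [sq_abs, ← cosh_abs (c * |t|), ← cosh_abs (c * t), abs_mul, abs_mul, abs_abs]
  have h_half := integral_comp_abs (f := fun t : ℝ ↦ exp (-a * t ^ 2) * cosh (c * t))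
  simp only [h_even, integral_exp_neg_mul_sq_mul_cosh ha] at h_half
  linarith

end GaussianMoments

section Dawson

lemma exp_sq_mul_dawson (x : ℝ) :
    exp (x ^ 2) * dawson x = ∫ u in (0 : ℝ)..x, exp (u ^ 2) := by
  rw [dawson, ← mul_assoc, ← exp_add, add_neg_cancel, exp_zero, one_mul]

lemma integral_mul_exp_sq (x y : ℝ) :
    ∫ u in x..y, u * exp (u ^ 2) = (exp (y ^ 2) - exp (x ^ 2)) / 2 := by
  have antideriv (u : ℝ) : HasDerivAt (fun u ↦ exp (u ^ 2) / 2) (u * exp (u ^ 2)) u := by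
    refine ((hasDerivAt_pow 2 u).exp.div_const 2).congr_deriv ?_
    push_cast
    ring
  rw [intervalIntegral.integral_eq_sub_of_hasDerivAt (fun u _ ↦ antideriv u)
    (Continuous.intervalIntegrable (by fun_prop) _ _), sub_div]

lemma integral_sub_mul_exp_sq (x : ℝ) :
    ∫ u in (0 : ℝ)..x, (x - u) * exp (u ^ 2) =
      x * (exp (x ^ 2) * dawson x) - (exp (x ^ 2) - 1) / 2 := by
  simp only [sub_mul]
  rw [intervalIntegral.integral_sub (Continuous.intervalIntegrable (by fun_prop) _ _)
    (Continuous.intervalIntegrable (by fun_prop) _ _), intervalIntegral.integral_const_mul,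
    integral_mul_exp_sq, exp_sq_mul_dawson, zero_pow two_ne_zero, exp_zero]

lemma integral_sub_mul_exp_div_sq {r : ℝ} (hr : r ≠ 0) (x : ℝ) :
    ∫ s in (0 : ℝ)..(r * x), (r * x - s) * exp ((s / r) ^ 2) =
      r ^ 2 * (x * (exp (x ^ 2) * dawson x) - (exp (x ^ 2) - 1) / 2) := by
  have h_scale := intervalIntegral.integral_comp_mul_left
    (a := 0) (b := x) (fun s ↦ (r * x - s) * exp ((s / r) ^ 2)) hr
  simp only [mul_div_cancel_left₀ _ hr, ← mul_sub, mul_assoc, intervalIntegral.integral_const_mul,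
    integral_sub_mul_exp_sq, mul_zero, smul_eq_mul] at h_scale
  rw [eq_inv_mul_iff_mul_eq₀ hr] at h_scale
  rw [← h_scale]
  ring

end Dawson

section GaussianCosh

variable {a : ℝ}

lemma integrableOn_exp_neg_mul_sq_mul_cosh_sub_one_div_sq (ha : 0 < a) (c : ℝ) :
    IntegrableOn (fun t ↦ exp (-a * t ^ 2) * ((cosh (c * t) - 1) / t ^ 2)) (Set.Ioi 0) :=
  integrable_mul_cosh_sub_one_div_sq (measure_singleton 0)
    (integrable_exp_neg_mul_sq_mul_cosh ha c).restrict

theorem integral_exp_neg_mul_sq_mul_cosh_sub_one_div_sq (ha : 0 < a) (x : ℝ) :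
    ∫ t in Set.Ioi (0 : ℝ), exp (-a * t ^ 2) * ((cosh (2 * √a * x * t) - 1) / t ^ 2) =
      √(a * π) * (2 * x * exp (x ^ 2) * dawson x - (exp (x ^ 2) - 1)) := by
  have h_sq (s : ℝ) : s ^ 2 / (4 * a) = (s / (2 * √a)) ^ 2 := by
    rw [div_pow, mul_pow, sq_sqrt ha.le]
    norm_num
  have h_const : √(π / a) * a = √(a * π) := by
    rw [sqrt_div pi_nonneg, sqrt_mul ha.le, div_mul_eq_mul_div, mul_div_assoc, div_sqrt, mul_comm]
  calc ∫ t in Set.Ioi (0 : ℝ), exp (-a * t ^ 2) * ((cosh (2 * √a * x * t) - 1) / t ^ 2)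
      = ∫ s in (0 : ℝ)..(2 * √a * x),
          (2 * √a * x - s) * (√(π / a) / 2 * exp ((s / (2 * √a)) ^ 2)) := by
        rw [integral_mul_cosh_sub_one_div_sq (measure_singleton 0)
          (integrable_exp_neg_mul_sq_mul_cosh ha _).restrict]
        simp only [integral_Ioi_exp_neg_mul_sq_mul_cosh ha, h_sq]
    _ = √(π / a) / 2 * ((2 * √a) ^ 2 *
          (x * (exp (x ^ 2) * dawson x) - (exp (x ^ 2) - 1) / 2)) := by
        simp only [mul_left_comm _ (√(π / a) / 2), intervalIntegral.integral_const_mul]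
        rw [integral_sub_mul_exp_div_sq (by positivity)]
    _ = √(a * π) * (2 * x * exp (x ^ 2) * dawson x - (exp (x ^ 2) - 1)) := by
        rw [mul_pow, sq_sqrt ha.le, ← h_const]
        ring

lemma integral_exp_neg_mul_sq_mul_cosh_sqrt_two_mul_sub_one_div_sq (ha : 0 < a) (w : ℝ) :
    ∫ t in Set.Ioi (0 : ℝ), exp (-a * t ^ 2) * ((cosh (√(2 * a) * w * t) - 1) / t ^ 2) =
      √(2 * π * a) * (w * exp (w ^ 2 / 2) * dawson (w / √2)) -
        √(a * π) * (exp (w ^ 2 / 2) - 1) := by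
  have h_half : w = √2 * (w / √2) := (mul_div_cancel₀ w (by positivity)).symm
  have h_param : √(2 * a) * w = 2 * √a * (w / √2) := by
    rw [sqrt_mul zero_le_two]
    linear_combination √2 * √a * h_half + √a * (w / √2) * sq_sqrt zero_le_two
  have h_const : √(2 * π * a) * w = √(a * π) * (2 * (w / √2)) := by
    rw [mul_assoc, mul_comm π, sqrt_mul zero_le_two]
    linear_combination √2 * √(a * π) * h_half + √(a * π) * (w / √2) * sq_sqrt zero_le_two
  have h_sq : w ^ 2 / 2 = (w / √2) ^ 2 := by rw [div_pow, sq_sqrt zero_le_two]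
  rw [h_param, integral_exp_neg_mul_sq_mul_cosh_sub_one_div_sq ha, h_sq]
  linear_combination -exp ((w / √2) ^ 2) * dawson (w / √2) * h_const

end GaussianCosh

theorem gaussian_cosh_diff_integral (a b d : ℝ) (ha : 0 < a)
    (v w : ℝ) (hv : v = (b - d) / Real.sqrt (2 * a)) (hw : w = (b + d) / Real.sqrt (2 * a)) :
    ∫ t in Set.Ioi (0 : ℝ),
        Real.exp (-a * t ^ 2) * (Real.cosh ((b + d) * t) - Real.cosh ((b - d) * t)) * t ^ (-2 : ℤ)
      = Real.sqrt (a * π) * (Real.exp (v ^ 2 / 2) - Real.exp (w ^ 2 / 2)) +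
          Real.sqrt (2 * π * a) *
            (w * Real.exp (w ^ 2 / 2) * dawson (w / Real.sqrt 2) -
              v * Real.exp (v ^ 2 / 2) * dawson (v / Real.sqrt 2)) := by
  have h_sqrt : √(2 * a) ≠ 0 := by positivity
  have h_sum : b + d = √(2 * a) * w := by rw [hw, mul_div_cancel₀ _ h_sqrt]
  have h_sub : b - d = √(2 * a) * v := by rw [hv, mul_div_cancel₀ _ h_sqrt]
  calc
    _ = ∫ t in Set.Ioi (0 : ℝ), (exp (-a * t ^ 2) * ((cosh ((b + d) * t) - 1) / t ^ 2) -
          exp (-a * t ^ 2) * ((cosh ((b - d) * t) - 1) / t ^ 2)) := by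
      congr with t
      rw [zpow_neg, zpow_ofNat]
      ring
    _ = _ := by
      rw [integral_sub (integrableOn_exp_neg_mul_sq_mul_cosh_sub_one_div_sq ha _)
        (integrableOn_exp_neg_mul_sq_mul_cosh_sub_one_div_sq ha _), h_sum, h_sub,
        integral_exp_neg_mul_sq_mul_cosh_sqrt_two_mul_sub_one_div_sq ha,
        integral_exp_neg_mul_sq_mul_cosh_sqrt_two_mul_sub_one_div_sq ha]
      ring
end
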